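/- arXiv:2305.12294 — 3 statements merged into one kernel-verified Lean document; each statement's English description precedes it below -/
import Mathlib

section
/- Let M be an o-minimal structure, let A ⊆ M be an infinite definable subset of the line, and let φ(x;y) be a formula with |x| = 1. Then the family {φ(A;b) : b ∈ M^{|y|}} of subsets of A has cardinality at most |A|. -/
open FirstOrder FirstOrder.Language Set Cardinal Filter Topology

universe u

/-- A subset of a linear order is a finite union of points and open intervals
with endpoints in `M ∪ {-∞, +∞}` (lower endpoints in `WithBot M = M ∪ {-∞}`,
upper endpoints in `WithTop M = M ∪ {+∞}`). -/
def IsFinUnionPointsIntervals {M : Type*} [LinearOrder M] (s : Set M) : Prop :=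
  ∃ (P : Finset M) (I : Finset (WithBot M × WithTop M)),
    s = ↑P ∪ ⋃ p ∈ I, {x : M | p.1 < (x : WithBot M) ∧ (x : WithTop M) < p.2}

/-- `M` is an o-minimal `L`-structure: the language defines the linear order of `M`,
which is dense and without endpoints, and every subset of `M` definable with parameters
is a finite union of points and open intervals with endpoints in `M ∪ {-∞, +∞}`. -/
structure IsOMinimal (L : FirstOrder.Language) (M : Type*) [L.Structure M] [LinearOrder M] :
    Prop where
  denselyOrdered : DenselyOrdered M
  noMinOrder : NoMinOrder M
  noMaxOrder : NoMaxOrder M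
  definable_lt : (∅ : Set M).Definable L {x : Fin 2 → M | x 0 < x 1}
  tame : ∀ s : Set M, (Set.univ : Set M).Definable₁ L s → IsFinUnionPointsIntervals s

theorem aux_def {L : FirstOrder.Language.{u, u}} {M : Type u}
    [L.Structure M] {k : ℕ} (φ : L.Formula (Fin 1 ⊕ Fin k)) (b : Fin k → M) :
    (Set.univ : Set M).Definable₁ L {a | φ.Realize (Sum.elim (fun _ => a) b)} := by
  refine ⟨BoundedFormula.subst ((L.lhomWithConstants (Set.univ : Set M)).onFormula φ)
    (Sum.elim (fun i => Term.var i)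
      (fun j => (L.con (⟨b j, trivial⟩ : (Set.univ : Set M))).term)), ?_⟩
  ext x
  simp only [mem_ofPred_eq, Formula.Realize]
  rw [BoundedFormula.realize_subst]
  have h : (fun a => Term.realize x ((Sum.elim (fun i => Term.var i)
      (fun j => (L.con (⟨b j, trivial⟩ : (Set.univ : Set M))).term) :
      Fin 1 ⊕ Fin k → L[[(Set.univ : Set M)]].Term (Fin 1)) a)) =
      Sum.elim (fun _ => x 0) b := by
    funext a
    rcases a with i | j
    · simp [Subsingleton.elim i 0]
    · simp
  rw [h]
  exact (LHom.realize_onFormula (L.lhomWithConstants (Set.univ : Set M)) φ).symm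

theorem aux_left {M : Type u} [LinearOrder M] [DenselyOrdered M] (P : Finset M)
    (I : Finset (WithBot M × WithTop M)) (A D : Set M) (hD : D.Finite)
    (hA : A = ↑P ∪ ⋃ p ∈ I, {x : M | p.1 < (x : WithBot M) ∧ (x : WithTop M) < p.2})
    (hP : ↑P ⊆ D) (h1 : ∀ p ∈ I, ∀ x : M, p.1 = x → x ∈ D)
    (p x : M) (hpx : p < x) (hs : ∀ y, p < y → y < x → y ∈ A) : p ∈ A ∪ D := by
  by_contra hp
  simp only [mem_union, not_or] at hp
  obtain ⟨hpA, hpD⟩ := hp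
  obtain ⟨m, ⟨hm, hm'⟩⟩ : ∃ m, p < m ∧ ∀ y ∈ insert x D, p < y → m ≤ y := by
    obtain ⟨m, hm⟩ := ((hD.insert x).inter_of_left (Ioi p)).exists_minimal
      ⟨x, mem_insert _ _, hpx⟩
    exact ⟨m, hm.1.2, fun y hy hpy => not_lt.1 fun hlt => absurd (hm.2 ⟨hy, hpy⟩ hlt.le) (not_le.2 hlt)⟩
  obtain ⟨y, hpy, hym⟩ := exists_between hm
  have hyA := hs y hpy (hym.trans_le (hm' x (mem_insert _ _) hpx))
  rw [hA] at hyA hpA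
  rcases hyA with hy | hy
  · exact absurd (hm' y (mem_insert_of_mem _ (hP hy)) hpy) (not_le.2 hym)
  · simp only [mem_iUnion, mem_ofPred_eq] at hy
    obtain ⟨⟨u, v⟩, hi, hu, hv⟩ := hy
    apply hpA
    right
    simp only [mem_iUnion, mem_ofPred_eq]
    refine ⟨(u, v), hi, ?_, lt_trans (WithTop.coe_lt_coe.2 hpy) hv⟩
    induction u with
    | bot => exact WithBot.bot_lt_coe _
    | coe u =>
      have huD := h1 _ hi u rfl
      have huy : u < y := WithBot.coe_lt_coe.1 hu
      apply WithBot.coe_lt_coe.2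
      rcases lt_trichotomy u p with h | h | h
      · exact h
      · exact absurd (h ▸ huD) hpD
      · exact absurd (hm' u (mem_insert_of_mem _ huD) h) (not_le.2 (huy.trans hym))

theorem aux_right {M : Type u} [LinearOrder M] [DenselyOrdered M] (P : Finset M)
    (I : Finset (WithBot M × WithTop M)) (A D : Set M) (hD : D.Finite)
    (hA : A = ↑P ∪ ⋃ p ∈ I, {x : M | p.1 < (x : WithBot M) ∧ (x : WithTop M) < p.2})
    (hP : ↑P ⊆ D) (h1 : ∀ p ∈ I, ∀ x : M, p.2 = x → x ∈ D)
    (p x : M) (hpx : x < p) (hs : ∀ y, y < p → x < y → y ∈ A) : p ∈ A ∪ D := by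
  by_contra hp
  simp only [mem_union, not_or] at hp
  obtain ⟨hpA, hpD⟩ := hp
  obtain ⟨m, ⟨hm, hm'⟩⟩ : ∃ m, m < p ∧ ∀ y ∈ insert x D, y < p → y ≤ m := by
    obtain ⟨m, hm⟩ := ((hD.insert x).inter_of_left (Iio p)).exists_maximal
      ⟨x, mem_insert _ _, hpx⟩
    exact ⟨m, hm.1.2, fun y hy hpy => not_lt.1 fun hlt => absurd (hm.2 ⟨hy, hpy⟩ hlt.le) (not_le.2 hlt)⟩
  obtain ⟨y, hym, hpy⟩ := exists_between hm
  have hyA := hs y hpy ((hm' x (mem_insert _ _) hpx).trans_lt hym)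
  rw [hA] at hyA hpA
  rcases hyA with hy | hy
  · exact absurd (hm' y (mem_insert_of_mem _ (hP hy)) hpy) (not_le.2 hym)
  · simp only [mem_iUnion, mem_ofPred_eq] at hy
    obtain ⟨⟨u, v⟩, hi, hu, hv⟩ := hy
    apply hpA
    right
    simp only [mem_iUnion, mem_ofPred_eq]
    refine ⟨(u, v), hi, lt_trans hu (WithBot.coe_lt_coe.2 hpy), ?_⟩
    induction v with
    | top => exact WithTop.coe_lt_top _
    | coe v =>
      have huD := h1 _ hi v rfl
      have huy : y < v := WithTop.coe_lt_coe.1 hv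
      apply WithTop.coe_lt_coe.2
      rcases lt_trichotomy p v with h | h | h
      · exact h
      · exact absurd (h ▸ huD) hpD
      · exact absurd (hm' v (mem_insert_of_mem _ huD) h) (not_le.2 (hym.trans huy))

theorem aux_count {M : Type u} [LinearOrder M] (E : Set M) (hE : E.Infinite) :
    #{s : Set M | ∃ (P : Finset M) (I : Finset (WithBot M × WithTop M)), ↑P ⊆ E ∧
      (∀ p ∈ I, p ∈ (insert ⊥ ((↑) '' E) : Set (WithBot M)) ×ˢ
        (insert ⊤ ((↑) '' E) : Set (WithTop M))) ∧
      s = ↑P ∪ ⋃ p ∈ I, {x : M | p.1 < (x : WithBot M) ∧ (x : WithTop M) < p.2}} ≤ #E := by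
  classical
  set W : Set (WithBot M) := insert ⊥ ((↑) '' E) with hW
  set V : Set (WithTop M) := insert ⊤ ((↑) '' E) with hV
  have : Infinite E := hE.to_subtype
  have hE0 : ℵ₀ ≤ #E := infinite_iff.1 this
  have hWc : #W ≤ #E := (mk_insert_le).trans
    ((add_le_add_left mk_image_le 1).trans (add_one_eq hE0).le)
  have hVc : #V ≤ #E := (mk_insert_le).trans
    ((add_le_add_left mk_image_le 1).trans (add_one_eq hE0).le)
  have : Infinite W := ((hE.image WithBot.coe_injective.injOn).mono (subset_insert _ _)).to_subtype
  have : Infinite V := ((hE.image WithTop.coe_injective.injOn).mono (subset_insert _ _)).to_subtype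
  let F : Finset E × Finset (W × V) → Set M := fun q =>
    ↑(q.1.map (Function.Embedding.subtype _)) ∪
      ⋃ p ∈ q.2, {x : M | p.1.1 < (x : WithBot M) ∧ (x : WithTop M) < p.2.1}
  have hsub : {s : Set M | ∃ (P : Finset M) (I : Finset (WithBot M × WithTop M)), ↑P ⊆ E ∧
      (∀ p ∈ I, p ∈ W ×ˢ V) ∧
      s = ↑P ∪ ⋃ p ∈ I, {x : M | p.1 < (x : WithBot M) ∧ (x : WithTop M) < p.2}} ⊆
      Set.range F := by
    rintro s ⟨P, I, hP, hI, rfl⟩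
    refine ⟨(P.subtype (· ∈ E), I.attach.image
      (fun p => (⟨p.1.1, (hI p.1 p.2).1⟩, ⟨p.1.2, (hI p.1 p.2).2⟩))), ?_⟩
    simp only [F]
    congr 1
    · congr 1
      exact Finset.subtype_map_of_mem (fun x hx => hP hx)
    · ext x
      simp
      constructor
      · rintro ⟨a, h, -, y, h'⟩
        exact ⟨a, h, y, h'⟩
      · rintro ⟨a, h, y, h'⟩
        exact ⟨a, h, (hI _ h'.1).1, y, h'⟩
  refine (mk_le_mk_of_subset hsub).trans (mk_range_le.trans ?_)
  rw [mk_prod, lift_id, lift_id, mk_finset_of_infinite, mk_finset_of_infinite, mk_prod, lift_id,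
    lift_id]
  exact (mul_le_mul' le_rfl (mul_le_mul' hWc hVc)).trans (by rw [mul_eq_self hE0, mul_eq_self hE0])

theorem card_definable_family_le_one_var {L : FirstOrder.Language.{u, u}} {M : Type u}
    [L.Structure M] [LinearOrder M] (hM : IsOMinimal L M) (A : Set M)
    (hAdef : (Set.univ : Set M).Definable₁ L A) (hAinf : A.Infinite)
    {k : ℕ} (φ : L.Formula (Fin 1 ⊕ Fin k)) :
    #{s : Set M | ∃ b : Fin k → M,
        s = {a ∈ A | φ.Realize (Sum.elim (fun _ => a) b)}} ≤ #A := by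
  classical
  have := hM.denselyOrdered
  obtain ⟨P, I, hA⟩ := hM.tame A hAdef
  let D : Set M := ↑P ∪ ((↑) ⁻¹' (Prod.fst '' (I : Set (WithBot M × WithTop M))) ∪
    (↑) ⁻¹' (Prod.snd '' (I : Set (WithBot M × WithTop M))))
  have hD : D.Finite := P.finite_toSet.union
    (((I.finite_toSet.image _).preimage WithBot.coe_injective.injOn).union
      ((I.finite_toSet.image _).preimage WithTop.coe_injective.injOn))
  have hPD : ↑P ⊆ D := subset_union_left
  have h1 : ∀ p ∈ I, ∀ x : M, p.1 = x → x ∈ D := fun p hp x hx => Or.inr (Or.inl ⟨p, hp, hx⟩)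
  have h2 : ∀ p ∈ I, ∀ x : M, p.2 = x → x ∈ D := fun p hp x hx => Or.inr (Or.inr ⟨p, hp, hx⟩)
  have hA0 : ℵ₀ ≤ #A := infinite_iff.1 hAinf.to_subtype
  have hcard : #(A ∪ D : Set M) ≤ #A := (mk_union_le _ _).trans
    (add_le_of_le hA0 le_rfl (hD.lt_aleph0.le.trans hA0))
  refine (mk_le_mk_of_subset ?_).trans
    ((aux_count (A ∪ D) (hAinf.mono subset_union_left)).trans hcard)
  rintro s ⟨b, hs⟩
  have hsA : s ⊆ A := by rw [hs]; exact fun x hx => hx.1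
  have hsdef : (Set.univ : Set M).Definable₁ L s := by
    rw [hs]
    exact hAdef.inter (aux_def φ b)
  obtain ⟨Q, J, hQ⟩ := hM.tame s hsdef
  refine ⟨Q, J.filter (fun p => ∃ x : M, p.1 < (x : WithBot M) ∧ (x : WithTop M) < p.2),
    ?_, ?_, ?_⟩
  · intro x hx
    exact Or.inl (hsA (by rw [hQ]; exact Or.inl hx))
  · rintro ⟨u, v⟩ hp
    rw [Finset.mem_filter] at hp
    obtain ⟨hJ, x, hu, hv⟩ := hp
    have key : ∀ y : M, u < (y : WithBot M) → (y : WithTop M) < v → y ∈ A := by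
      intro y hy hy'
      apply hsA
      rw [hQ]
      right
      simp only [mem_iUnion, mem_ofPred_eq]
      exact ⟨(u, v), hJ, hy, hy'⟩
    constructor
    · induction u with
      | bot => exact mem_insert _ _
      | coe u =>
        refine mem_insert_of_mem _ ⟨u, ?_, rfl⟩
        exact aux_left P I A D hD hA hPD h1 u x (WithBot.coe_lt_coe.1 hu) fun y hy hyx =>
          key y (WithBot.coe_lt_coe.2 hy) (lt_trans (WithTop.coe_lt_coe.2 hyx) hv)
    · induction v with
      | top => exact mem_insert _ _
      | coe v =>
        refine mem_insert_of_mem _ ⟨v, ?_, rfl⟩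
        exact aux_right P I A D hD hA hPD h2 v x (WithTop.coe_lt_coe.1 hv) fun y hy hyx =>
          key y (lt_trans hu (WithBot.coe_lt_coe.2 hyx)) (WithTop.coe_lt_coe.2 hy)
  · rw [hQ]
    congr 1
    ext x
    simp only [mem_iUnion, mem_ofPred_eq, Finset.mem_filter]
    constructor
    · rintro ⟨p, hp, hx⟩
      exact ⟨p, ⟨hp, x, hx⟩, hx⟩
    · rintro ⟨p, ⟨hp, _⟩, hx⟩
      exact ⟨p, hp, hx⟩
end

section
/- Let M be an o-minimal structure and let A ⊆ M^{n+1} be a definable set. For c ∈ M^n write A_c = {t ∈ M : (c,t) ∈ A} for the fiber of A over c. Then there exists a natural number k such that for every c ∈ M^n the set cl(A_c) \ A_c has at most k elements, where cl denotes closure in the order topology on M. In particular |cl(A_c)| ≤ |A_c| + k for every c. -/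
open FirstOrder FirstOrder.Language Set Cardinal Filter Topology

universe u

set_option linter.unusedSectionVars false
set_option synthInstance.maxSize 100000
set_option synthInstance.maxHeartbeats 400000
set_option maxHeartbeats 1000000

namespace OM

section Def

/-- contexts -/
class Ctx (M : Type u) (Γ : Type u) where
  ι : Type
  fin : Finite ι
  e : Γ ≃ (ι → M)

instance ctxUnit (M : Type u) : Ctx M PUnit.{u+1} where
  ι := Empty
  fin := inferInstance
  e := ⟨fun _ i => i.elim, fun _ => PUnit.unit, fun _ => rfl, fun _ => funext fun i => i.elim⟩

instance ctxSelf (M : Type u) : Ctx M M where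
  ι := Unit
  fin := inferInstance
  e := ⟨fun x _ => x, fun v => v (), fun _ => rfl, fun _ => rfl⟩

instance ctxProd (M Γ Δ : Type u) [Ctx M Γ] [Ctx M Δ] : Ctx M (Γ × Δ) where
  ι := Ctx.ι M Γ ⊕ Ctx.ι M Δ
  fin := by
    have := Ctx.fin (M := M) (Γ := Γ)
    have := Ctx.fin (M := M) (Γ := Δ)
    infer_instance
  e := (Equiv.prodCongr Ctx.e Ctx.e).trans (Equiv.sumArrowEquivProdArrow _ _ _).symm

instance ctxFin (M : Type u) (n : ℕ) : Ctx M (Fin n → M) where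
  ι := Fin n
  fin := inferInstance
  e := Equiv.refl _

instance ctxFinite (M Γ : Type u) [Ctx M Γ] : Finite (Ctx.ι M Γ) := Ctx.fin

variable (L : FirstOrder.Language.{u, u}) (M : Type u) [L.Structure M]
variable {Γ Δ Θ : Type u} [Ctx M Γ] [Ctx M Δ] [Ctx M Θ]

/-- definable predicates -/
class Dfn (P : Γ → Prop) : Prop where
  out : (Set.univ : Set M).Definable L {v : Ctx.ι M Γ → M | P (Ctx.e.symm v)}

variable {L M}

theorem Dfn.congr {P Q : Γ → Prop} (h : Dfn L M P) (hPQ : ∀ g, Q g ↔ P g) : Dfn L M Q := by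
  have : Q = P := funext fun g => propext (hPQ g)
  rw [this]; exact h

theorem Dfn.coord {P : Δ → Prop} (h : Dfn L M P) (f : Γ → Δ) (σ : Ctx.ι M Δ → Ctx.ι M Γ)
    (hf : ∀ g j, (Ctx.e (f g) : _ → M) j = (Ctx.e g : _ → M) (σ j)) :
    Dfn L M (fun g => P (f g)) := by
  constructor
  have := h.out.preimage_comp σ
  convert this using 1
  ext v
  simp only [mem_ofPred_eq, mem_preimage]
  have : f (Ctx.e.symm v) = Ctx.e.symm (v ∘ σ) := by
    apply (Ctx.e (M := M)).injective
    funext j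
    rw [hf]; simp
  rw [this]

instance Dfn.and {P Q : Γ → Prop} [hP : Dfn L M P] [hQ : Dfn L M Q] :
    Dfn L M (fun g => P g ∧ Q g) := ⟨hP.out.inter hQ.out⟩

instance Dfn.or {P Q : Γ → Prop} [hP : Dfn L M P] [hQ : Dfn L M Q] :
    Dfn L M (fun g => P g ∨ Q g) := ⟨hP.out.union hQ.out⟩

instance Dfn.not {P : Γ → Prop} [hP : Dfn L M P] :
    Dfn L M (fun g => ¬ P g) := ⟨hP.out.compl⟩

instance Dfn.imp {P Q : Γ → Prop} [hP : Dfn L M P] [hQ : Dfn L M Q] :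
    Dfn L M (fun g => P g → Q g) :=
  Dfn.congr (P := fun g => ¬ P g ∨ Q g) inferInstance (fun _ => imp_iff_not_or)

instance Dfn.iff {P Q : Γ → Prop} [hP : Dfn L M P] [hQ : Dfn L M Q] :
    Dfn L M (fun g => P g ↔ Q g) :=
  Dfn.congr (P := fun g => (P g → Q g) ∧ (Q g → P g)) inferInstance (fun _ => iff_iff_implies_and_implies)

instance Dfn.cst (p : Prop) : Dfn L M (fun _ : Γ => p) := by
  constructor
  by_cases h : p
  · simp [h]
  · simp [h]

instance Dfn.ex {P : Γ → Δ → Prop} [hP : Dfn L M (fun z : Γ × Δ => P z.1 z.2)] :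
    Dfn L M (fun g => ∃ t, P g t) := by
  constructor
  have := hP.out.image_comp (Sum.inl : Ctx.ι M Γ → Ctx.ι M Γ ⊕ Ctx.ι M Δ)
  convert this using 1
  ext v
  simp only [mem_ofPred_eq, mem_image]
  constructor
  · rintro ⟨t, ht⟩
    refine ⟨Ctx.e (M := M) ((Ctx.e.symm v : Γ), t), ?_, ?_⟩
    · simpa using ht
    · funext i
      simp [Ctx.e, Equiv.sumArrowEquivProdArrow]
  · rintro ⟨w, hw, rfl⟩
    exact ⟨_, hw⟩

instance Dfn.all {P : Γ → Δ → Prop} [hP : Dfn L M (fun z : Γ × Δ => P z.1 z.2)] :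
    Dfn L M (fun g => ∀ t, P g t) :=
  Dfn.congr (P := fun g => ¬ ∃ t, ¬ P g t) inferInstance (fun _ => by simp)

variable (L M) in
/-- definable maps -/
class DM (f : Γ → Δ) : Prop where
  out : ∀ (Θ : Type u) [Ctx M Θ] (P : Δ × Θ → Prop), Dfn L M P →
    Dfn L M (fun z : Γ × Θ => P (f z.1, z.2))

instance DM.id : DM L M (fun g : Γ => g) := ⟨fun _ _ _ h => h⟩

theorem DM.comp {f : Δ → Θ} {h : Γ → Δ} (hf : DM L M f) (hh : DM L M h) :
    DM L M (fun g => f (h g)) :=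
  ⟨fun Ξ _ P hP => hh.out Ξ (fun z => P (f z.1, z.2)) (hf.out Ξ P hP)⟩

theorem DM.ofCoord (f : Γ → Δ) (σ : Ctx.ι M Δ → Ctx.ι M Γ)
    (hf : ∀ g j, (Ctx.e (f g) : _ → M) j = (Ctx.e g : _ → M) (σ j)) : DM L M f :=
  ⟨fun Ξ _ P hP => Dfn.coord hP (fun z : Γ × Ξ => (f z.1, z.2)) (Sum.map σ _root_.id) (by
    rintro ⟨g, t⟩ (j | j)
    · exact hf g j
    · rfl)⟩

theorem DM.pfst : DM L M (fun z : Γ × Δ => z.1) :=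
  DM.ofCoord _ Sum.inl (fun _ _ => rfl)

theorem DM.psnd : DM L M (fun z : Γ × Δ => z.2) :=
  DM.ofCoord _ Sum.inr (fun _ _ => rfl)

instance DM.fst {f : Γ → Δ × Θ} [hf : DM L M f] : DM L M (fun g => (f g).1) :=
  DM.comp DM.pfst hf

instance DM.snd {f : Γ → Δ × Θ} [hf : DM L M f] : DM L M (fun g => (f g).2) :=
  DM.comp DM.psnd hf

theorem DM.subst {P : Δ → Prop} (hP : Dfn L M P) {f : Γ → Δ} (hf : DM L M f) :
    Dfn L M (fun g => P (f g)) :=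
  Dfn.coord (hf.out PUnit (fun z => P z.1) (Dfn.coord hP _ Sum.inl (fun _ _ => rfl)))
    (fun g => (g, PUnit.unit)) (Sum.elim _root_.id Empty.elim) (by
      rintro g (j | j)
      · rfl
      · exact j.elim)

instance DM.pair {f : Γ → Δ} {h : Γ → Θ} [hf : DM L M f] [hh : DM L M h] :
    DM L M (fun g => (f g, h g)) := by
  constructor
  intro Ξ _ P hP
  have h1 : Dfn L M (fun z : Δ × (Θ × Ξ) => P ((z.1, z.2.1), z.2.2)) :=
    Dfn.coord hP _ (Sum.elim (Sum.elim Sum.inl (Sum.inr ∘ Sum.inl)) (Sum.inr ∘ Sum.inr)) (by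
      rintro g ((j | j) | j) <;> rfl)
  have h2 := hf.out (Θ × Ξ) _ h1
  have h3 : Dfn L M (fun z : Θ × (Γ × Ξ) => P ((f z.2.1, z.1), z.2.2)) :=
    Dfn.coord h2 (fun z : Θ × (Γ × Ξ) => (z.2.1, (z.1, z.2.2)))
      (Sum.elim (Sum.inr ∘ Sum.inl) (Sum.elim Sum.inl (Sum.inr ∘ Sum.inr))) (by
      rintro g (j | (j | j)) <;> rfl)
  have h4 := hh.out (Γ × Ξ) _ h3
  exact Dfn.coord h4 (fun z : Γ × Ξ => (z.1, (z.1, z.2)))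
    (Sum.elim Sum.inl (Sum.elim Sum.inl Sum.inr)) (by
      rintro g (j | (j | j)) <;> rfl)

theorem Dfn.eqCst (c : Γ) : Dfn L M (fun g : Γ => g = c) := by
  constructor
  have : {v : Ctx.ι M Γ → M | (Ctx.e.symm v : Γ) = c} =
      ⋂ i : Ctx.ι M Γ, {v | v i = (Ctx.e c : _ → M) i} := by
    ext v
    simp only [mem_ofPred_eq, mem_iInter]
    rw [Equiv.symm_apply_eq]
    exact funext_iff
  rw [this]
  apply Set.definable_iInter_of_finite
  intro i
  have := (Set.Definable.singleton (L := L) ((Ctx.e c : _ → M) i)).mono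
    (Set.subset_univ _) |>.preimage_comp (fun _ => i : _ → Ctx.ι M Γ)
  exact this

instance DM.cst (c : Δ) : DM L M (fun _ : Γ => c) := by
  constructor
  intro Ξ _ P hP
  have h0 : Dfn L M (fun z : Ξ × Δ => P (z.2, z.1)) :=
    Dfn.coord hP (fun z : Ξ × Δ => (z.2, z.1)) (Sum.elim Sum.inr Sum.inl) (by
      rintro g (j | j) <;> rfl)
  have : Dfn L M (fun z : Ξ × Δ => z.2 = c) := DM.subst (Dfn.eqCst c) DM.psnd
  have h1 : Dfn L M (fun t : Ξ => ∃ d : Δ, d = c ∧ P (d, t)) := inferInstance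
  have h2 : Dfn L M (fun t : Ξ => P (c, t)) := h1.congr (by simp)
  exact DM.subst h2 DM.psnd

theorem Dfn.eqM : Dfn L M (fun z : M × M => z.1 = z.2) := by
  constructor
  have := (Set.Definable.diagonal (L := L) (Set.univ : Set M)).preimage_comp
    (fun i => if i = 0 then Sum.inl () else Sum.inr () : _ → Unit ⊕ Unit)
  exact this

instance (priority := low) Dfn.atom {P : Δ → Prop} {f : Γ → Δ} [hP : Dfn L M P] [hf : DM L M f] :
    Dfn L M (fun g => P (f g)) := DM.subst hP hf

instance Dfn.eq {f h : Γ → M} [hf : DM L M f] [hh : DM L M h] :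
    Dfn L M (fun g => f g = h g) :=
  DM.subst (Dfn.eqM) (DM.pair (f := f) (h := h))

theorem DM.ofGraph {f : Γ → M} (h : Dfn L M (fun z : Γ × M => z.2 = f z.1)) : DM L M f := by
  constructor
  intro Ξ _ P hP
  have : Dfn L M (fun z : (Γ × Ξ) × M => z.2 = f z.1.1) :=
    DM.subst h (f := fun z : (Γ × Ξ) × M => (z.1.1, z.2)) inferInstance
  have h1 : Dfn L M (fun z : Γ × Ξ => ∃ d : M, d = f z.1 ∧ P (d, z.2)) := inferInstance
  exact h1.congr (by simp)

instance (priority := low) DM.app {f : Δ → Θ} {h : Γ → Δ} [hf : DM L M f] [hh : DM L M h] :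
    DM L M (fun g => f (h g)) := DM.comp hf hh

instance DM.pfst' : DM L M (Prod.fst : Γ × Δ → Γ) := DM.pfst

instance DM.psnd' : DM L M (Prod.snd : Γ × Δ → Δ) := DM.psnd

instance DM.mkEta (c : Γ) : DM L M (Prod.mk c : Δ → Γ × Δ) :=
  DM.pair (f := fun _ : Δ => c) (h := fun d : Δ => d)

instance Dfn.eqEta (c : M) : Dfn L M (Eq c) :=
  Dfn.eq (f := fun _ : M => c) (h := fun d : M => d)

end Def

section Ord
variable {L : FirstOrder.Language.{u, u}} {M : Type u} [L.Structure M] [LinearOrder M]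
variable {Γ Δ Θ : Type u} [Ctx M Γ] [Ctx M Δ] [Ctx M Θ]

variable (L M) in
/-- o-minimality as a class -/
class OMin : Prop where
  om : IsOMinimal L M

variable [hom : OMin L M]

instance Dfn.lt {f h : Γ → M} [hf : DM L M f] [hh : DM L M h] :
    Dfn L M (fun g => f g < h g) := by
  have h0 : Dfn L M (fun z : M × M => z.1 < z.2) := by
    constructor
    have := (hom.om.definable_lt.mono (Set.empty_subset Set.univ)).preimage_comp
      (fun i => if i = 0 then Sum.inl () else Sum.inr () : _ → Unit ⊕ Unit)
    exact this
  exact DM.subst h0 (DM.pair (f := f) (h := h))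

instance Dfn.le {f h : Γ → M} [hf : DM L M f] [hh : DM L M h] :
    Dfn L M (fun g => f g ≤ h g) :=
  Dfn.congr (P := fun g => ¬ (h g < f g)) inferInstance (fun _ => by simp)

instance Dfn.ltEta (c : M) : Dfn L M (LT.lt c) :=
  Dfn.lt (f := fun _ : M => c) (h := fun d : M => d)

instance Dfn.leEta (c : M) : Dfn L M (LE.le c) :=
  Dfn.le (f := fun _ : M => c) (h := fun d : M => d)

variable [TopologicalSpace M] [OrderTopology M] [DenselyOrdered M] [NoMinOrder M] [NoMaxOrder M]

theorem ev_nhds {a : M} {P : M → Prop} :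
    (∀ᶠ x in 𝓝 a, P x) ↔ ∃ u v, u < a ∧ a < v ∧ ∀ x, u < x → x < v → P x := by
  rw [Filter.Eventually, mem_nhds_iff_exists_Ioo_subset]
  constructor
  · rintro ⟨u, v, ⟨h1, h2⟩, h⟩
    exact ⟨u, v, h1, h2, fun x a b => h ⟨a, b⟩⟩
  · rintro ⟨u, v, h1, h2, h⟩
    exact ⟨u, v, ⟨h1, h2⟩, fun x a => h x a.1 a.2⟩

theorem ev_gt {a : M} {P : M → Prop} :
    (∀ᶠ x in 𝓝[>] a, P x) ↔ ∃ v, a < v ∧ ∀ x, a < x → x < v → P x := by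
  rw [Filter.Eventually, mem_nhdsGT_iff_exists_Ioo_subset]
  constructor
  · rintro ⟨v, h1, h⟩
    exact ⟨v, h1, fun x a b => h ⟨a, b⟩⟩
  · rintro ⟨v, h1, h⟩
    exact ⟨v, h1, fun x a => h x a.1 a.2⟩

theorem ev_lt {a : M} {P : M → Prop} :
    (∀ᶠ x in 𝓝[<] a, P x) ↔ ∃ v, v < a ∧ ∀ x, v < x → x < a → P x := by
  rw [Filter.Eventually, mem_nhdsLT_iff_exists_Ioo_subset]
  constructor
  · rintro ⟨v, h1, h⟩
    exact ⟨v, h1, fun x a b => h ⟨a, b⟩⟩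
  · rintro ⟨v, h1, h⟩
    exact ⟨v, h1, fun x a => h x a.1 a.2⟩

instance Dfn.evNhds {f : Γ → M} {P : Γ → M → Prop} [hf : DM L M f]
    [hP : Dfn L M (fun z : Γ × M => P z.1 z.2)] :
    Dfn L M (fun g => ∀ᶠ x in 𝓝 (f g), P g x) := by
  have : Dfn L M (fun z : ((Γ × M) × M) × M => P z.1.1.1 z.2) :=
    DM.subst hP (f := fun z : ((Γ × M) × M) × M => (z.1.1.1, z.2)) inferInstance
  exact Dfn.congr (P := fun g => ∃ u v, u < f g ∧ f g < v ∧ ∀ x, u < x → x < v → P g x)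
    inferInstance (fun _ => ev_nhds)

instance Dfn.evGt {f : Γ → M} {P : Γ → M → Prop} [hf : DM L M f]
    [hP : Dfn L M (fun z : Γ × M => P z.1 z.2)] :
    Dfn L M (fun g => ∀ᶠ x in 𝓝[>] (f g), P g x) := by
  have : Dfn L M (fun z : (Γ × M) × M => P z.1.1 z.2) :=
    DM.subst hP (f := fun z : (Γ × M) × M => (z.1.1, z.2)) inferInstance
  exact Dfn.congr (P := fun g => ∃ v, f g < v ∧ ∀ x, f g < x → x < v → P g x)
    inferInstance (fun _ => ev_gt)

instance Dfn.evLt {f : Γ → M} {P : Γ → M → Prop} [hf : DM L M f]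
    [hP : Dfn L M (fun z : Γ × M => P z.1 z.2)] :
    Dfn L M (fun g => ∀ᶠ x in 𝓝[<] (f g), P g x) := by
  have : Dfn L M (fun z : (Γ × M) × M => P z.1.1 z.2) :=
    DM.subst hP (f := fun z : (Γ × M) × M => (z.1.1, z.2)) inferInstance
  exact Dfn.congr (P := fun g => ∃ v, v < f g ∧ ∀ x, v < x → x < f g → P g x)
    inferInstance (fun _ => ev_lt)

end Ord

section Tame
variable {M : Type u} [LinearOrder M]

/-- tame predicates on a linear order -/
def Tm (D : M → Prop) : Prop :=
  ∃ F : Finset M, ∀ x y, x < y → (∀ z ∈ F, ¬ (x ≤ z ∧ z ≤ y)) → (D x ↔ D y)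

theorem Tm.dual {D : M → Prop} (h : Tm D) : Tm (M := Mᵒᵈ) (fun x => D (OrderDual.ofDual x)) := by
  obtain ⟨F, hF⟩ := h
  refine ⟨F.map OrderDual.toDual.toEmbedding, fun x y hxy hz => ?_⟩
  refine (hF (OrderDual.ofDual y) (OrderDual.ofDual x) hxy fun z hzF hh => ?_).symm
  exact hz (OrderDual.toDual z) (by simpa using hzF) ⟨hh.2, hh.1⟩

theorem Tm.ofFin {s : Set M} (h : IsFinUnionPointsIntervals s) : Tm (fun x => x ∈ s) := by
  classical
  obtain ⟨P, I, rfl⟩ := h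
  have hfin : ({z : M | ∃ p ∈ I, p.1 = (z : WithBot M) ∨ p.2 = (z : WithTop M)}).Finite := by
    have : {z : M | ∃ p ∈ I, p.1 = (z : WithBot M) ∨ p.2 = (z : WithTop M)} =
        ⋃ p ∈ I, ({z : M | p.1 = (z : WithBot M)} ∪ {z : M | p.2 = (z : WithTop M)}) := by
      ext z; simp
    rw [this]
    refine Set.Finite.biUnion I.finite_toSet fun p _ => ?_
    refine Set.Finite.union (Set.Subsingleton.finite ?_) (Set.Subsingleton.finite ?_)
    · intro x hx y hy
      exact WithBot.coe_injective (hx.symm.trans hy)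
    · intro x hx y hy
      exact WithTop.coe_injective (hx.symm.trans hy)
  refine ⟨P ∪ hfin.toFinset, fun x y hxy hz => ?_⟩
  have hP : ∀ z ∈ P, ¬ (x ≤ z ∧ z ≤ y) := fun z hzP => hz z (by simp [hzP])
  have hI : ∀ p ∈ I, ∀ z : M, (p.1 = (z : WithBot M) ∨ p.2 = (z : WithTop M)) →
      ¬ (x ≤ z ∧ z ≤ y) := fun p hp z hpz => hz z (by
        simp only [Finset.mem_union, Set.Finite.mem_toFinset]
        exact Or.inr ⟨p, hp, hpz⟩)
  have hx : x ∉ P := fun h => hP x h ⟨le_rfl, hxy.le⟩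
  have hy : y ∉ P := fun h => hP y h ⟨hxy.le, le_rfl⟩
  simp only [mem_union, Finset.mem_coe, hx, hy, false_or, mem_iUnion]
  constructor
  · rintro ⟨⟨p, q⟩, hp, h1, h2⟩
    refine ⟨(p, q), hp, lt_trans h1 (by exact_mod_cast hxy), ?_⟩
    by_contra hc
    have hc' : q ≤ (y : WithTop M) := not_lt.1 hc
    lift q to M using ne_top_of_le_ne_top WithTop.coe_ne_top hc'
    have h2' : x < q := by
      change (x : WithTop M) < (q : WithTop M) at h2
      exact_mod_cast h2
    exact hI _ hp q (Or.inr rfl) ⟨h2'.le, by exact_mod_cast hc'⟩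
  · rintro ⟨⟨p, q⟩, hp, h1, h2⟩
    refine ⟨(p, q), hp, ?_, lt_trans (by exact_mod_cast hxy) h2⟩
    by_contra hc
    have hc' : (x : WithBot M) ≤ p := not_lt.1 hc
    lift p to M using ne_bot_of_le_ne_bot WithBot.coe_ne_bot hc'
    have h1' : p < y := by
      change (p : WithBot M) < (y : WithBot M) at h1
      exact_mod_cast h1
    exact hI _ hp p (Or.inl rfl) ⟨by exact_mod_cast hc', h1'.le⟩

variable [TopologicalSpace M] [OrderTopology M] [DenselyOrdered M] [NoMinOrder M] [NoMaxOrder M]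

/-- a function is locally constant at a point -/
def LC {S : Type*} (k : M → S) (z : M) : Prop := ∀ᶠ y in 𝓝 z, k y = k z

theorem Tm.germR {D : M → Prop} (h : Tm D) (a : M) :
    (∀ᶠ y in 𝓝[>] a, D y) ∨ (∀ᶠ y in 𝓝[>] a, ¬ D y) := by
  obtain ⟨F, hF⟩ := h
  have h1 : ∀ᶠ y in 𝓝[>] a, ∀ z ∈ F, a < z → y < z := by
    rw [Filter.eventually_all_finset]
    intro z _
    by_cases haz : a < z
    · filter_upwards [nhdsWithin_le_nhds (eventually_lt_nhds haz)] with y hy _ using hy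
    · exact Filter.Eventually.of_forall fun y h => absurd h haz
  obtain ⟨v, hv, hvs⟩ := ev_gt.1 h1
  have key : ∀ x y, a < x → x < y → y < v → (D x ↔ D y) := by
    intro x y hx hxy hy
    refine hF x y hxy fun z hz hh => ?_
    exact absurd (hvs y (hx.trans hxy) hy z hz (hx.trans_le hh.1)) (not_lt.2 hh.2)
  obtain ⟨w, hw1, hw2⟩ := exists_between hv
  have key2 : ∀ x, a < x → x < v → (D x ↔ D w) := by
    intro x hx hxv
    rcases lt_trichotomy x w with h | h | h
    · exact key _ _ hx h hw2
    · rw [h]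
    · exact (key _ _ hw1 h hxv).symm
  by_cases hD : D w
  · exact Or.inl (ev_gt.2 ⟨v, hv, fun x h1 h2 => (key2 x h1 h2).2 hD⟩)
  · exact Or.inr (ev_gt.2 ⟨v, hv, fun x h1 h2 hx => hD ((key2 x h1 h2).1 hx)⟩)

theorem Tm.germL {D : M → Prop} (h : Tm D) (a : M) :
    (∀ᶠ y in 𝓝[<] a, D y) ∨ (∀ᶠ y in 𝓝[<] a, ¬ D y) := by
  have := h.dual.germR (OrderDual.toDual a)
  rw [ev_gt, ev_gt] at this
  rw [ev_lt, ev_lt]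
  rcases this with ⟨v, hv, h⟩ | ⟨v, hv, h⟩
  · exact Or.inl ⟨OrderDual.ofDual v, hv, fun x h1 h2 => h (OrderDual.toDual x) h2 h1⟩
  · exact Or.inr ⟨OrderDual.ofDual v, hv, fun x h1 h2 => h (OrderDual.toDual x) h2 h1⟩

theorem Tm.lcFinite {D : M → Prop} (h : Tm D) : {z | ¬ LC D z}.Finite := by
  obtain ⟨F, hF⟩ := h
  refine F.finite_toSet.subset fun z hz => ?_
  by_contra hzF
  apply hz
  have h1 : ∀ᶠ y in 𝓝 z, ∀ w ∈ F, (z < w → y < w) ∧ (w < z → w < y) := by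
    rw [Filter.eventually_all_finset]
    intro w _
    refine Filter.Eventually.and ?_ ?_
    · by_cases haz : z < w
      · filter_upwards [eventually_lt_nhds haz] with y hy _ using hy
      · exact Filter.Eventually.of_forall fun y h => absurd h haz
    · by_cases haz : w < z
      · filter_upwards [eventually_gt_nhds haz] with y hy _ using hy
      · exact Filter.Eventually.of_forall fun y h => absurd h haz
  filter_upwards [h1] with y hy
  have hne : ∀ w ∈ F, z ≠ w := fun w hw h => hzF (h ▸ hw)
  apply propext
  rcases lt_trichotomy y z with h | h | h
  · refine hF y z h fun w hw hh => ?_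
    exact absurd ((hy w hw).2 (lt_of_le_of_ne hh.2 (hne w hw).symm)) (not_lt.2 hh.1)
  · rw [h]
  · refine (hF z y h fun w hw hh => ?_).symm
    exact absurd ((hy w hw).1 (lt_of_le_of_ne hh.1 (hne w hw))) (not_lt.2 hh.2)

theorem Tm.conn {D : M → Prop} (h : Tm D) {a b : M} (hab : a ≤ b)
    (hlc : ∀ z, a ≤ z → z ≤ b → LC D z) : D a ↔ D b := by
  classical
  obtain ⟨F, hF⟩ := h
  have main : ∀ n : ℕ, ∀ a b : M, a ≤ b → (∀ z, a ≤ z → z ≤ b → LC D z) →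
      (F.filter (fun z => a ≤ z ∧ z ≤ b)).card ≤ n → (D a ↔ D b) := by
    intro n
    induction n with
    | zero =>
      intro a b hab _ hc
      rcases hab.eq_or_lt with rfl | hlt
      · rfl
      refine hF a b hlt fun z hz hh => ?_
      have : z ∈ F.filter (fun z => a ≤ z ∧ z ≤ b) := by simp [hz, hh]
      rw [Finset.card_eq_zero.1 (Nat.le_zero.1 hc)] at this
      simp at this
    | succ n ih =>
      intro a b hab hlc hc
      by_cases hne : ∃ f ∈ F, a ≤ f ∧ f ≤ b
      swap
      · push Not at hne
        rcases hab.eq_or_lt with rfl | hlt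
        · rfl
        exact hF a b hlt fun z hz hh => absurd hh.2 (not_le.2 (hne z hz hh.1))
      obtain ⟨f, hfF, haf, hfb⟩ := hne
      obtain ⟨u, v, huf, hfv, huv⟩ := ev_nhds.1 (hlc f haf hfb)
      have h1 : D a ↔ D f := by
        rcases haf.eq_or_lt with rfl | hlt
        · rfl
        obtain ⟨x, hx1, hx2⟩ := exists_between (max_lt huf hlt)
        have hux := (le_max_left _ _).trans_lt hx1
        have hax := (le_max_right _ _).trans_lt hx1
        have e1 : D x = D f := huv x hux (hx2.trans hfv)
        rw [← e1]
        refine ih a x hax.le (fun z h1 h2 => hlc z h1 (h2.trans (hx2.le.trans hfb))) ?_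
        refine Nat.le_of_lt_succ (lt_of_lt_of_le (Finset.card_lt_card ?_) hc)
        refine Finset.ssubset_iff_subset_ne.2 ⟨?_, ?_⟩
        · intro z hz
          simp only [Finset.mem_filter] at hz ⊢
          exact ⟨hz.1, hz.2.1, hz.2.2.trans (hx2.le.trans hfb)⟩
        · intro he
          have : f ∈ F.filter (fun z => a ≤ z ∧ z ≤ b) := by simp [hfF, haf, hfb]
          rw [← he] at this
          simp only [Finset.mem_filter] at this
          exact absurd this.2.2 (not_le.2 hx2)
      have h2 : D f ↔ D b := by
        rcases hfb.eq_or_lt with rfl | hlt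
        · rfl
        obtain ⟨x, hx1, hx2⟩ := exists_between (lt_min hfv hlt)
        have hux := hx2.trans_le (min_le_left _ _)
        have hax := hx2.trans_le (min_le_right _ _)
        have e1 : D x = D f := huv x (huf.trans hx1) hux
        rw [← e1]
        refine ih x b hax.le (fun z h1 h2 => hlc z (haf.trans (hx1.le.trans h1)) h2) ?_
        refine Nat.le_of_lt_succ (lt_of_lt_of_le (Finset.card_lt_card ?_) hc)
        refine Finset.ssubset_iff_subset_ne.2 ⟨?_, ?_⟩
        · intro z hz
          simp only [Finset.mem_filter] at hz ⊢
          exact ⟨hz.1, (haf.trans hx1.le).trans hz.2.1, hz.2.2⟩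
        · intro he
          have : f ∈ F.filter (fun z => a ≤ z ∧ z ≤ b) := by simp [hfF, haf, hfb]
          rw [← he] at this
          simp only [Finset.mem_filter] at this
          exact absurd this.2.1 (not_le.2 hx1)
      exact h1.trans h2
  exact main _ a b hab hlc le_rfl

/-- boundary of an up-closed set -/
theorem Tm.inf {E : M → Prop} (h : Tm E) (hup : ∀ x y, x ≤ y → E x → E y) {a b : M}
    (ha : ¬ E a) (hb : E b) : ∃ z, a ≤ z ∧ z ≤ b ∧ (∀ y, z < y → E y) ∧ (∀ y, y < z → ¬ E y) := by
  have hab : a ≤ b := by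
    by_contra hc
    exact ha (hup b a (not_le.1 hc).le hb)
  have : ∃ z, a ≤ z ∧ z ≤ b ∧ ¬ LC E z := by
    by_contra hc
    push Not at hc
    exact ha ((h.conn hab hc).2 hb)
  obtain ⟨z, h1, h2, hz⟩ := this
  refine ⟨z, h1, h2, fun y hy => ?_, fun y hy hE => ?_⟩
  · by_contra hE
    apply hz
    filter_upwards [eventually_lt_nhds hy] with x hx
    have e1 : ¬ E x := fun h => hE (hup _ _ hx.le h)
    have e2 : ¬ E z := fun h => hE (hup _ _ hy.le h)
    simp [e1, e2]
  · apply hz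
    filter_upwards [eventually_gt_nhds hy] with x hx
    simp [hup _ _ hx.le hE, hup _ _ hy.le hE]

theorem Tm.sup {E : M → Prop} (h : Tm E) (hdn : ∀ x y, x ≤ y → E y → E x) {a b : M}
    (ha : E a) (hb : ¬ E b) : ∃ z, a ≤ z ∧ z ≤ b ∧ (∀ y, y < z → E y) ∧ (∀ y, z < y → ¬ E y) := by
  obtain ⟨z, h1, h2, h3, h4⟩ := h.dual.inf (a := OrderDual.toDual b) (b := OrderDual.toDual a)
    (fun x y hxy hx => hdn _ _ hxy hx) hb ha
  exact ⟨OrderDual.ofDual z, h2, h1, fun y hy => h3 (OrderDual.toDual y) hy,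
    fun y hy => h4 (OrderDual.toDual y) hy⟩

theorem Tm.interval {D : M → Prop} (h : Tm D) (hinf : {x | D x}.Infinite) :
    ∃ u v, u < v ∧ ∀ x, u < x → x < v → D x := by
  obtain ⟨z, hz, hzF⟩ := hinf.exists_notMem_finite h.lcFinite
  have : LC D z := by simpa using hzF
  obtain ⟨u, v, h1, h2, h3⟩ := ev_nhds.1 this
  exact ⟨u, v, h1.trans h2, fun x a b => by rw [h3 x a b]; exact hz⟩

theorem Tm.cofinite {D : M → Prop} (h : Tm (fun x => ¬ D x))
    (hd : ∀ u v, u < v → ∃ x, u < x ∧ x < v ∧ D x) : ∀ᶠ x in cofinite, D x := by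
  rw [Filter.eventually_cofinite]
  by_contra hc
  obtain ⟨u, v, huv, hh⟩ := h.interval hc
  obtain ⟨x, h1, h2, h3⟩ := hd u v huv
  exact hh x h1 h2 h3

theorem cof_dense {D : M → Prop} (h : ∀ᶠ x in cofinite, D x) {u v : M} (huv : u < v) :
    ∃ x, u < x ∧ x < v ∧ D x := by
  rw [Filter.eventually_cofinite] at h
  obtain ⟨x, hx, hxF⟩ := (Set.Ioo_infinite huv).exists_notMem_finite h
  exact ⟨x, hx.1, hx.2, by simpa using hxF⟩

/-- piecewise constancy -/
theorem finite_range_of_lc {S : Type*} (k : M → S) (hk : ∀ s, Tm (fun x => k x = s))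
    (hlc : ∀ᶠ x in cofinite, LC k x) : (Set.range k).Finite := by
  classical
  rw [Filter.eventually_cofinite] at hlc
  set F := hlc.toFinset with hF
  have hmem : ∀ z, z ∉ F → LC k z := fun z hz => by simpa [hF] using hz
  have h1 : (k '' (F : Set M)).Finite := F.finite_toSet.image k
  have h2 : (k '' {x | x ∉ F}).Finite := by
    have key : ∀ x y, x ∉ F → y ∉ F → x < y →
        F.filter (fun z => z < x) = F.filter (fun z => z < y) → k x = k y := by
      intro x y hx hy hxy he
      have := (hk (k x)).conn hxy.le (fun z h1 h2 => ?_)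
      · exact (this.1 rfl).symm
      · have hz : z ∉ F := by
          intro hz
          rcases h2.eq_or_lt with rfl | h2
          · exact hy hz
          have : z ∈ F.filter (fun z => z < y) := by simp [hz, h2]
          rw [← he] at this
          simp only [Finset.mem_filter] at this
          exact absurd this.2 (not_lt.2 h1)
        have := hmem z hz
        unfold LC at this ⊢
        filter_upwards [this] with w hw
        rw [hw]
    have key' : ∀ x y, x ∉ F → y ∉ F →
        F.filter (fun z => z < x) = F.filter (fun z => z < y) → k x = k y := by
      intro x y hx hy he
      rcases lt_trichotomy x y with h | h | h
      · exact key x y hx hy h he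
      · rw [h]
      · exact (key y x hy hx h he.symm).symm
    let φ : {x // x ∉ F} → Finset M := fun x => F.filter (fun z => z < x.1)
    have hφ : (Set.range φ).Finite :=
      (F.powerset.finite_toSet).subset (by
        rintro _ ⟨x, rfl⟩
        exact Finset.mem_coe.2 (Finset.mem_powerset.2 (Finset.filter_subset _ _)))
    by_cases hne : Nonempty {x // x ∉ F}
    · refine (hφ.image (fun s => k (Function.invFun φ s).1)).subset ?_
      rintro _ ⟨x, hx, rfl⟩
      refine ⟨φ ⟨x, hx⟩, ⟨_, rfl⟩, ?_⟩
      apply key' _ _ (Function.invFun φ (φ ⟨x, hx⟩)).2 hx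
      exact Function.invFun_eq (f := φ) ⟨⟨x, hx⟩, rfl⟩
    · refine Set.Finite.subset (Set.finite_empty) ?_
      rintro _ ⟨x, hx, rfl⟩
      exact (hne ⟨⟨x, hx⟩⟩).elim
  refine (h1.union h2).subset ?_
  rintro _ ⟨x, rfl⟩
  by_cases hx : x ∈ F
  · exact Or.inl ⟨x, hx, rfl⟩
  · exact Or.inr ⟨x, hx, rfl⟩

end Tame

section DT
variable {L : FirstOrder.Language.{u, u}} {M : Type u} [L.Structure M] [LinearOrder M] [hom : OMin L M]

theorem Dfn.tm {D : M → Prop} (h : Dfn L M D) : Tm D := by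
  have h2 : (Set.univ : Set M).Definable₁ L {x | D x} := by
    have := h.out.preimage_comp (fun _ => 0 : Unit → Fin 1)
    exact this
  exact Tm.ofFin (hom.om.tame _ h2)

end DT

section MonoThm
variable {M : Type u} [LinearOrder M]

/-- tameness hypotheses on a relation -/
structure H1 (R : M → M → Prop) : Prop where
  t : ∀ x, Tm (fun y => R x y)
  e : ∀ x d, Tm (fun z => ∀ y, z < y → y < d → R x y)
  b : ∀ d, Tm (fun x => ∀ y, x < y → y < d → R x y)
  r : Tm (fun x => ∃ v, x < v ∧ ∀ y, x < y → y < v → R x y)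
  p : Tm (fun z => ∃ u v, u < z ∧ z < v ∧ ∀ y y', u < y → y < z → z < y' → y' < v → R y' y)

/-- all four -/
structure FT {N : Type*} [LinearOrder N] (f : M → N) : Prop where
  h1 : H1 (fun x y => f x < f y)
  h2 : H1 (fun x y => f y < f x)
  h3 : H1 (M := Mᵒᵈ) (fun x y => f (OrderDual.ofDual x) < f (OrderDual.ofDual y))
  h4 : H1 (M := Mᵒᵈ) (fun x y => f (OrderDual.ofDual y) < f (OrderDual.ofDual x))

theorem FT.neg {N : Type*} [LinearOrder N] {f : M → N} (h : FT f) :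
    FT (fun x => OrderDual.toDual (f x)) :=
  ⟨h.h2, h.h1, h.h4, h.h3⟩

variable [TopologicalSpace M] [OrderTopology M] [DenselyOrdered M] [NoMinOrder M] [NoMaxOrder M]

theorem PSI {N : Type*} [LinearOrder N] {f : M → N} (h1 : H1 (fun x y => f x < f y))
    (h2 : H1 (fun x y => f y < f x)) {a b : M} (hab : a < b)
    (inj : ∀ x y, a < x → x < b → a < y → y < b → f x = f y → x = y)
    (lm : ∀ x, a < x → x < b → ∃ u v, u < x ∧ x < v ∧ ∀ y, u < y → y < v → y ≠ x → f x < f y) :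
    ∃ z, a < z ∧ z < b ∧
      ∃ u v, u < z ∧ z < v ∧ ∀ y y', u < y → y < z → z < y' → y' < v → f y' < f y := by
  obtain ⟨a', ha', ha'b, hB⟩ : ∃ a', a ≤ a' ∧ a' < b ∧ ∀ x, a' < x → x < b →
      ∃ y, x < y ∧ y < b ∧ ¬ f x < f y := by
    rcases (h1.b b).germL b with h | h
    · exfalso
      obtain ⟨w, hw, hh⟩ := ev_lt.1 h
      obtain ⟨x, hx1, hx2⟩ := exists_between (max_lt hw hab)
      obtain ⟨hwx, hax⟩ := max_lt_iff.1 hx1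
      obtain ⟨u, v, hu, hv, hm⟩ := lm x hax hx2
      obtain ⟨y, hy1, hy2⟩ := exists_between (max_lt hu hwx)
      obtain ⟨huy, hwy⟩ := max_lt_iff.1 hy1
      exact lt_asymm (hm y huy (hy2.trans hv) hy2.ne) (hh y hwy (hy2.trans hx2) x hy2 hx2)
    · obtain ⟨w, hw, hh⟩ := ev_lt.1 h
      refine ⟨max w a, le_max_right _ _, max_lt hw hab, fun x hx hxb => ?_⟩
      have := hh x (max_lt_iff.1 hx).1 hxb
      push Not at this
      obtain ⟨y, q1, q2, q3⟩ := this
      exact ⟨y, q1, q2, not_lt.2 q3⟩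
  obtain ⟨x, hx1, hxb⟩ := exists_between ha'b
  have hax := ha'.trans_lt hx1
  rcases (h1.t x).germL b with h | h
  · exfalso
    obtain ⟨w, hw, hh⟩ := ev_lt.1 h
    obtain ⟨z, hxz, hzw, hE, hnE⟩ := (h1.e x b).inf (a := x) (b := max w x)
      (fun p q hpq hp y hy hyb => hp y (hpq.trans_lt hy) hyb)
      (fun hc => by
        obtain ⟨y, q1, q2, q3⟩ := hB x hx1 hxb
        exact q3 (hc y q1 q2))
      (fun y hy hyb => hh y (max_lt_iff.1 hy).1 hyb)
    have hzb : z < b := hzw.trans_lt (max_lt hw hxb)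
    have hEz : ∀ y, z < y → y < b → f x < f y := by
      intro y hy hyb
      obtain ⟨t, ht1, ht2⟩ := exists_between hy
      exact hE t ht1 y ht2 hyb
    have hxz' : x < z := by
      rcases hxz.eq_or_lt with rfl | h
      · obtain ⟨y, q1, q2, q3⟩ := hB x hx1 hxb
        exact absurd (hEz y q1 q2) q3
      · exact h
    rcases lt_trichotomy (f x) (f z) with hlt | heq | hgt
    · obtain ⟨u, v, hu, hv, hm⟩ := lm z (hax.trans hxz') hzb
      refine hnE u hu fun y huy hyb => ?_
      rcases lt_trichotomy y z with q | q | q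
      · exact hlt.trans (hm y huy (q.trans hv) q.ne)
      · rw [q]; exact hlt
      · exact hEz y q hyb
    · exact hxz'.ne (inj x z hax hxb (hax.trans hxz') hzb heq)
    · obtain ⟨y, q1, q2, q3⟩ := hB z (hx1.trans hxz') hzb
      exact q3 (hgt.trans (hEz y q1 q2))
  · obtain ⟨w, hw, hh⟩ := ev_lt.1 h
    have hlmx := lm x hax hxb
    have hnEx : ¬ ∀ y, x < y → y < b → f y < f x := by
      intro hc
      obtain ⟨u, v, hu, hv, hm⟩ := hlmx
      obtain ⟨y, hy1, hy2⟩ := exists_between (lt_min hv hxb)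
      obtain ⟨q1, q2⟩ := lt_min_iff.1 hy2
      exact lt_asymm (hm y (hu.trans hy1) q1 hy1.ne') (hc y hy1 q2)
    obtain ⟨z, hxz, hzw, hE, hnE⟩ := (h2.e x b).inf (a := x) (b := max w x)
      (fun p q hpq hp y hy hyb => hp y (hpq.trans_lt hy) hyb)
      hnEx
      (fun y hy hyb => by
        obtain ⟨q1, q2⟩ := max_lt_iff.1 hy
        refine lt_of_le_of_ne (not_lt.1 (hh y q1 hyb)) fun hc => ?_
        exact q2.ne' (inj y x (hax.trans q2) hyb hax hxb hc))
    have hzb : z < b := hzw.trans_lt (max_lt hw hxb)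
    have hEz : ∀ y, z < y → y < b → f y < f x := by
      intro y hy hyb
      obtain ⟨t, ht1, ht2⟩ := exists_between hy
      exact hE t ht1 y ht2 hyb
    have hxz' : x < z := by
      rcases hxz.eq_or_lt with rfl | h
      · exact absurd hEz hnEx
      · exact h
    have hz : f z < f x := by
      rcases lt_trichotomy (f x) (f z) with hlt | heq | hgt
      · exfalso
        obtain ⟨u, v, hu, hv, hm⟩ := lm z (hax.trans hxz') hzb
        obtain ⟨y, hy1, hy2⟩ := exists_between (lt_min hv hzb)
        obtain ⟨q1, q2⟩ := lt_min_iff.1 hy2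
        exact lt_asymm (hlt.trans (hm y (hu.trans hy1) q1 hy1.ne')) (hEz y hy1 q2)
      · exact absurd (inj x z hax hxb (hax.trans hxz') hzb heq) hxz'.ne
      · exact hgt
    refine ⟨z, hax.trans hxz', hzb, ?_⟩
    rcases (h1.t x).germL z with h | h
    · obtain ⟨u, hu, hh⟩ := ev_lt.1 h
      exact ⟨u, b, hu, hzb, fun y y' q1 q2 q3 q4 => (hEz y' q3 q4).trans (hh y q1 q2)⟩
    · exfalso
      obtain ⟨u, hu, hh⟩ := ev_lt.1 h
      refine hnE (max u x) (max_lt hu hxz') fun y hy hyb => ?_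
      obtain ⟨q1, q2⟩ := max_lt_iff.1 hy
      rcases lt_trichotomy y z with q | q | q
      · refine lt_of_le_of_ne (not_lt.1 (hh y q1 q)) fun hc => ?_
        exact q2.ne' (inj y x (hax.trans q2) hyb hax hxb hc)
      · rw [q]; exact hz
      · exact hEz y q hyb

theorem noMin {N : Type*} [LinearOrder N] {f : M → N} (hf : FT f) {a b : M} (hab : a < b)
    (inj : ∀ x y, a < x → x < b → a < y → y < b → f x = f y → x = y)
    (lm : ∀ x, a < x → x < b → ∃ u v, u < x ∧ x < v ∧ ∀ y, u < y → y < v → y ≠ x → f x < f y) :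
    False := by
  have dense : ∀ c d, a ≤ c → c < d → d ≤ b → ∃ z, c < z ∧ z < d ∧
      ∃ u v, u < z ∧ z < v ∧ ∀ y y', u < y → y < z → z < y' → y' < v → f y' < f y := by
    intro c d hc hcd hd
    exact PSI hf.h1 hf.h2 hcd
      (fun x y q1 q2 q3 q4 => inj x y (hc.trans_lt q1) (q2.trans_le hd) (hc.trans_lt q3)
        (q4.trans_le hd))
      (fun x q1 q2 => lm x (hc.trans_lt q1) (q2.trans_le hd))
  rcases hf.h1.p.germR a with h | h
  · obtain ⟨w, hw, hh⟩ := ev_gt.1 h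
    have hac : a < min w b := lt_min hw hab
    obtain ⟨z, hz1, hz2, u, v, hu, hv, hm⟩ := PSI (M := Mᵒᵈ)
      (f := fun x => f (OrderDual.ofDual x)) hf.h3 hf.h4
      (a := OrderDual.toDual (min w b)) (b := OrderDual.toDual a) hac
      (fun x y q1 q2 q3 q4 he => inj (OrderDual.ofDual x) (OrderDual.ofDual y) q2
        (lt_of_lt_of_le (b := min w b) q1 (min_le_right _ _)) q4
        (lt_of_lt_of_le (b := min w b) q3 (min_le_right _ _)) he)
      (fun x q1 q2 => by
        obtain ⟨u, v, hu, hv, hm⟩ := lm (OrderDual.ofDual x) q2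
          (lt_of_lt_of_le (b := min w b) q1 (min_le_right _ _))
        exact ⟨OrderDual.toDual v, OrderDual.toDual u, hv, hu, fun y p1 p2 p3 =>
          hm (OrderDual.ofDual y) p2 p1 p3⟩)
    obtain ⟨u', v', hu', hv', hm'⟩ := hh (OrderDual.ofDual z) hz2
      (lt_of_lt_of_le (b := min w b) hz1 (min_le_left _ _))
    obtain ⟨y, hy1, hy2⟩ := exists_between (show max u' (OrderDual.ofDual v) < OrderDual.ofDual z from
      max_lt hu' hv)
    obtain ⟨y', hy1', hy2'⟩ := exists_between (show OrderDual.ofDual z < min v' (OrderDual.ofDual u) from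
      lt_min hv' hu)
    obtain ⟨p1, p2⟩ := max_lt_iff.1 hy1
    obtain ⟨p3, p4⟩ := lt_min_iff.1 hy2'
    exact lt_asymm (hm' y y' p1 hy2 hy1' p3)
      (hm (OrderDual.toDual y') (OrderDual.toDual y) p4 hy1' hy2 p2)
  · obtain ⟨w, hw, hh⟩ := ev_gt.1 h
    obtain ⟨z, hz1, hz2, hz⟩ := dense a (min w b) le_rfl (lt_min hw hab) (min_le_right _ _)
    exact hh z hz1 (lt_min_iff.1 hz2).1 hz

theorem locInc {N : Type*} [LinearOrder N] {f : M → N} (hf : FT f) {a b : M}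
    (hr : ∀ x, a < x → x < b → ∃ v, x < v ∧ ∀ y, x < y → y < v → f x < f y)
    (hl : ∀ x, a < x → x < b → ∃ v, v < x ∧ ∀ y, v < y → y < x → f y < f x) :
    StrictMonoOn f (Ioo a b) := by
  intro x hx y hy hxy
  by_contra hc
  obtain ⟨y2, hy2, hy2b⟩ := exists_between hy.2
  have htm : Tm (fun z => ∀ t, t < z → x < t → f x < f t) := (hf.h3.e (OrderDual.toDual x) (OrderDual.toDual x)).dual
  obtain ⟨z, hz1, hz2, hE, hnE⟩ := htm.sup (a := x) (b := y2)
    (fun p q hpq hq t ht hxt => hq t (ht.trans_le hpq) hxt)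
    (fun t h1 h2 => absurd h1 (lt_asymm h2))
    (fun h => hc (h y hy2 hxy))
  have hzb : z < b := hz2.trans_lt hy2b
  have hEz : ∀ t, t < z → x < t → f x < f t := by
    intro t ht hxt
    obtain ⟨s, hs1, hs2⟩ := exists_between ht
    exact hE s hs2 t hs1 hxt
  have hxz : x < z := by
    rcases hz1.eq_or_lt with rfl | h
    · obtain ⟨v, hv, hh⟩ := hr x hx.1 hx.2
      exact absurd (fun t h1 h2 => hh t h2 h1) (hnE v hv)
    · exact h
  have haz := hx.1.trans hxz
  obtain ⟨u, hu, hh⟩ := hl z haz hzb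
  obtain ⟨t, ht1, ht2⟩ := exists_between (max_lt hu hxz)
  obtain ⟨p1, p2⟩ := max_lt_iff.1 ht1
  have hfz : f x < f z := (hEz t ht2 p2).trans (hh t p1 ht2)
  obtain ⟨v, hv, hh'⟩ := hr z haz hzb
  refine hnE v hv fun s hs hxs => ?_
  rcases lt_trichotomy s z with q | q | q
  · exact hEz s q hxs
  · rw [q]; exact hfz
  · exact hfz.trans (hh' s q hs)

theorem mono {N : Type*} [LinearOrder N] {f : M → N} (hf : FT f) {a b : M} (hab : a < b)
    (inj : ∀ x y, a < x → x < b → a < y → y < b → f x = f y → x = y) :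
    ∃ d, a < d ∧ d ≤ b ∧ (StrictMonoOn f (Ioo a d) ∨ StrictAntiOn f (Ioo a d)) := by
  have hR : ∀ x, a < x → x < b → (¬ ∃ v, x < v ∧ ∀ y, x < y → y < v → f x < f y) →
      ∃ v, x < v ∧ ∀ y, x < y → y < v → f y < f x := by
    intro x hax hxb hn
    rcases (hf.h1.t x).germR x with h | h
    · exact absurd (ev_gt.1 h) hn
    · obtain ⟨v, hv, hh⟩ := ev_gt.1 h
      refine ⟨min v b, lt_min hv hxb, fun y h1 h2 => ?_⟩
      obtain ⟨p1, p2⟩ := lt_min_iff.1 h2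
      exact lt_of_le_of_ne (not_lt.1 (hh y h1 p1)) fun he =>
        h1.ne' (inj y x (hax.trans h1) p2 hax hxb he)
  have hL : ∀ x, a < x → x < b → (¬ ∃ v, v < x ∧ ∀ y, y < x → v < y → f x < f y) →
      ∃ v, v < x ∧ ∀ y, y < x → v < y → f y < f x := by
    intro x hax hxb hn
    rcases (hf.h1.t x).germL x with h | h
    · obtain ⟨v, hv, hh⟩ := ev_lt.1 h
      exact absurd ⟨v, hv, fun y p q => hh y q p⟩ hn
    · obtain ⟨v, hv, hh⟩ := ev_lt.1 h
      refine ⟨max v a, max_lt hv hax, fun y h1 h2 => ?_⟩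
      obtain ⟨p1, p2⟩ := max_lt_iff.1 h2
      exact lt_of_le_of_ne (not_lt.1 (hh y p1 h1)) fun he =>
        h1.ne (inj y x p2 (h1.trans hxb) hax hxb he)
  have hl : Tm (fun x => ∃ v, v < x ∧ ∀ y, y < x → v < y → f x < f y) := hf.h3.r.dual
  have inj' : ∀ d, d ≤ b → ∀ x y, a < x → x < d → a < y → y < d → f x = f y → x = y :=
    fun d hd x y q1 q2 q3 q4 => inj x y q1 (q2.trans_le hd) q3 (q4.trans_le hd)
  rcases hf.h1.r.germR a with h1 | h1 <;> obtain ⟨w, hw, h1⟩ := ev_gt.1 h1 <;>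
  rcases hl.germR a with h2 | h2 <;> obtain ⟨w', hw', h2⟩ := ev_gt.1 h2 <;>
  refine ⟨min b (min w w'), lt_min hab (lt_min hw hw'), min_le_left _ _, ?_⟩
  · exfalso
    refine noMin hf (lt_min hab (lt_min hw hw')) (inj' _ (min_le_left _ _)) fun x hx hxd => ?_
    simp only [lt_min_iff] at hxd
    obtain ⟨v, hv, hh⟩ := h1 x hx hxd.2.1
    obtain ⟨u, hu, hh'⟩ := h2 x hx hxd.2.2
    refine ⟨u, v, hu, hv, fun y p1 p2 p3 => ?_⟩
    rcases p3.lt_or_gt with q | q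
    · exact hh' y q p1
    · exact hh y q p2
  · left
    refine locInc hf (fun x hx hxd => ?_) (fun x hx hxd => ?_) <;> simp only [lt_min_iff] at hxd
    · exact h1 x hx hxd.2.1
    · obtain ⟨v, hv, hh⟩ := hL x hx hxd.1 (h2 x hx hxd.2.2)
      exact ⟨v, hv, fun y p q => hh y q p⟩
  · right
    have := locInc hf.neg (a := a) (b := min b (min w w'))
      (fun x hx hxd => ?_) (fun x hx hxd => ?_)
    · exact fun x hx y hy hxy => this hx hy hxy
    · simp only [lt_min_iff] at hxd
      exact hR x hx hxd.1 (h1 x hx hxd.2.1)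
    · simp only [lt_min_iff] at hxd
      obtain ⟨v, hv, hh⟩ := h2 x hx hxd.2.2
      exact ⟨v, hv, fun y p q => hh y q p⟩
  · exfalso
    refine noMin hf.neg (lt_min hab (lt_min hw hw'))
      (fun x y q1 q2 q3 q4 he => inj' _ (min_le_left _ _) x y q1 q2 q3 q4 he) fun x hx hxd => ?_
    simp only [lt_min_iff] at hxd
    obtain ⟨v, hv, hh⟩ := hR x hx hxd.1 (h1 x hx hxd.2.1)
    obtain ⟨u, hu, hh'⟩ := hL x hx hxd.1 (h2 x hx hxd.2.2)
    refine ⟨u, v, hu, hv, fun y p1 p2 p3 => ?_⟩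
    rcases p3.lt_or_gt with q | q
    · exact hh' y q p1
    · exact hh y q p2

end MonoThm

section ContThm
variable {L : FirstOrder.Language.{u, u}} {M : Type u} [L.Structure M] [LinearOrder M] [hom : OMin L M]
variable [TopologicalSpace M] [OrderTopology M] [DenselyOrdered M] [NoMinOrder M] [NoMaxOrder M]

theorem H1.ofDfn {R : M × M → Prop} (hR : Dfn L M R) : H1 (fun x y => R (x, y)) where
  t x := Dfn.tm (L := L) inferInstance
  e x d := Dfn.tm (L := L) inferInstance
  b d := Dfn.tm (L := L) inferInstance
  r := Dfn.tm (L := L) inferInstance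
  p := Dfn.tm (L := L) inferInstance

theorem H1.ofDfn' {R : M × M → Prop} (hR : Dfn L M R) :
    H1 (M := Mᵒᵈ) (fun x y => R (OrderDual.ofDual x, OrderDual.ofDual y)) where
  t x := (Dfn.tm (L := L) (D := fun y => R (OrderDual.ofDual x, y)) inferInstance).dual
  e x d := (Dfn.tm (L := L) (D := fun z => ∀ y : M, y < z → OrderDual.ofDual d < y →
    R (OrderDual.ofDual x, y)) inferInstance).dual
  b d := (Dfn.tm (L := L) (D := fun x => ∀ y : M, y < x → OrderDual.ofDual d < y →
    R (x, y)) inferInstance).dual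
  r := (Dfn.tm (L := L) (D := fun x => ∃ v : M, v < x ∧ ∀ y : M, y < x → v < y →
    R (x, y)) inferInstance).dual
  p := (Dfn.tm (L := L) (D := fun z => ∃ u v : M, z < u ∧ v < z ∧ ∀ y y' : M,
    y < u → z < y → y' < z → v < y' → R (y', y)) inferInstance).dual

theorem DM.ft {f : M → M} (hf : DM L M f) : FT f where
  h1 := H1.ofDfn (L := L) (R := fun z : M × M => f z.1 < f z.2) inferInstance
  h2 := H1.ofDfn (L := L) (R := fun z : M × M => f z.2 < f z.1) inferInstance
  h3 := H1.ofDfn' (L := L) (R := fun z : M × M => f z.1 < f z.2) inferInstance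
  h4 := H1.ofDfn' (L := L) (R := fun z : M × M => f z.2 < f z.1) inferInstance

/-- continuity at a point, order form -/
def CA (f : M → M) (x : M) : Prop :=
  ∀ c, (c < f x → ∀ᶠ y in 𝓝 x, c < f y) ∧ (f x < c → ∀ᶠ y in 𝓝 x, f y < c)

theorem cont {f : M → M} (hf : DM L M f) : ∀ᶠ x in cofinite, CA f x := by
  refine Tm.cofinite (Dfn.tm (L := L) (by unfold CA; infer_instance)) fun u v huv => ?_
  by_cases hfib : ∃ y, {x | u < x ∧ x < v ∧ f x = y}.Infinite
  · obtain ⟨y, hy⟩ := hfib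
    obtain ⟨c, d, hcd, hh⟩ := (Dfn.tm (L := L) (D := fun x => u < x ∧ x < v ∧ f x = y)
      inferInstance).interval hy
    obtain ⟨x, h1, h2⟩ := exists_between hcd
    have hx := hh x h1 h2
    refine ⟨x, hx.1, hx.2.1, fun e => ⟨fun he => ?_, fun he => ?_⟩⟩
    · exact ev_nhds.2 ⟨c, d, h1, h2, fun t p q => by rw [(hh t p q).2.2, ← hx.2.2]; exact he⟩
    · exact ev_nhds.2 ⟨c, d, h1, h2, fun t p q => by rw [(hh t p q).2.2, ← hx.2.2]; exact he⟩
  · simp only [not_exists, Set.not_infinite] at hfib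
    have hG : {x | u < x ∧ x < v ∧ ∀ x', u < x' → x' < x → f x' ≠ f x}.Infinite := by
      intro hfin
      refine Set.Ioo_infinite huv ?_
      refine ((hfin.image f).biUnion (t := fun y => {x | u < x ∧ x < v ∧ f x = y})
        fun y _ => hfib y).subset fun x hx => ?_
      obtain ⟨m, hm, hmin⟩ := (hfib (f x)).exists_minimal ⟨x, hx.1, hx.2, rfl⟩
      simp only [mem_iUnion]
      refine ⟨f x, ⟨m, ⟨hm.1, hm.2.1, fun x' h1 h2 h3 => ?_⟩, hm.2.2⟩, hx.1, hx.2, rfl⟩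
      exact absurd (hmin (y := x') ⟨h1, h2.trans hm.2.1, h3.trans hm.2.2⟩ h2.le) (not_le.2 h2)
    obtain ⟨c, d0, hcd0, hh⟩ := (Dfn.tm (L := L)
      (D := fun x => u < x ∧ x < v ∧ ∀ x', u < x' → x' < x → f x' ≠ f x)
      inferInstance).interval hG
    have inj : ∀ x y, c < x → x < d0 → c < y → y < d0 → f x = f y → x = y := by
      intro x y q1 q2 q3 q4 he
      rcases lt_trichotomy x y with h | h | h
      · exact absurd he ((hh y q3 q4).2.2 x (hh x q1 q2).1 h)
      · exact h
      · exact absurd he.symm ((hh x q1 q2).2.2 y (hh y q3 q4).1 h)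
    obtain ⟨d, hcd, hdd, hmono⟩ := mono hf.ft hcd0 inj
    have hinf : {y | ∃ x, c < x ∧ x < d ∧ y = f x}.Infinite := by
      have : {y | ∃ x, c < x ∧ x < d ∧ y = f x} = f '' (Ioo c d) := by
        ext y
        constructor
        · rintro ⟨x, h1, h2, rfl⟩; exact ⟨x, ⟨h1, h2⟩, rfl⟩
        · rintro ⟨x, h1, rfl⟩; exact ⟨x, h1.1, h1.2, rfl⟩
      rw [this]
      refine (Set.Ioo_infinite hcd).image fun x hx y hy he => ?_
      exact inj x y hx.1 (hx.2.trans_le hdd) hy.1 (hy.2.trans_le hdd) he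
    obtain ⟨p, q, hpq, hh2⟩ := (Dfn.tm (L := L) (D := fun y => ∃ x, c < x ∧ x < d ∧ y = f x)
      inferInstance).interval hinf
    obtain ⟨y, hy1, hy2⟩ := exists_between hpq
    obtain ⟨x, hx1, hx2, rfl⟩ := hh2 y hy1 hy2
    have hxx := hh x hx1 (hx2.trans_le hdd)
    refine ⟨x, hxx.1, hxx.2.1, fun e => ⟨fun he => ?_, fun he => ?_⟩⟩
    · obtain ⟨y1, h1, h2⟩ := exists_between (max_lt he hy1)
      obtain ⟨p1, p2⟩ := max_lt_iff.1 h1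
      obtain ⟨x1, s1, s2, rfl⟩ := hh2 y1 p2 (h2.trans hy2)
      rcases hmono with hm | hm
      · have : x1 < x := (hm.lt_iff_lt ⟨s1, s2⟩ ⟨hx1, hx2⟩).1 h2
        exact ev_nhds.2 ⟨x1, d, this, hx2, fun t t1 t2 =>
          p1.trans (hm ⟨s1, s2⟩ ⟨s1.trans t1, t2⟩ t1)⟩
      · have : x < x1 := (hm.lt_iff_gt ⟨s1, s2⟩ ⟨hx1, hx2⟩).1 h2
        exact ev_nhds.2 ⟨c, x1, hx1, this, fun t t1 t2 =>
          p1.trans (hm ⟨t1, t2.trans s2⟩ ⟨s1, s2⟩ t2)⟩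
    · obtain ⟨y1, h1, h2⟩ := exists_between (lt_min he hy2)
      obtain ⟨p1, p2⟩ := lt_min_iff.1 h2
      obtain ⟨x1, s1, s2, rfl⟩ := hh2 y1 (hy1.trans h1) p2
      rcases hmono with hm | hm
      · have : x < x1 := (hm.lt_iff_lt ⟨hx1, hx2⟩ ⟨s1, s2⟩).1 h1
        exact ev_nhds.2 ⟨c, x1, hx1, this, fun t t1 t2 =>
          (hm ⟨t1, t2.trans s2⟩ ⟨s1, s2⟩ t2).trans p1⟩
      · have : x1 < x := (hm.lt_iff_gt ⟨hx1, hx2⟩ ⟨s1, s2⟩).1 h1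
        exact ev_nhds.2 ⟨x1, d, this, hx2, fun t t1 t2 =>
          (hm ⟨s1, s2⟩ ⟨s1.trans t1, t2⟩ t1).trans p1⟩

end ContThm

section Sel
variable {L : FirstOrder.Language.{u, u}} {M : Type u} [L.Structure M] [LinearOrder M] [hom : OMin L M]
variable {Γ : Type u} [Ctx M Γ]

open Classical in
/-- least element selector -/
noncomputable def mn (Z : Γ × M → Prop) (d : Γ → M) (g : Γ) : M :=
  if h : ∃ m, Z (g, m) ∧ ∀ m', Z (g, m') → m ≤ m' then h.choose else d g

open Classical in
/-- greatest element selector -/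
noncomputable def mx (Z : Γ × M → Prop) (d : Γ → M) (g : Γ) : M :=
  if h : ∃ m, Z (g, m) ∧ ∀ m', Z (g, m') → m' ≤ m then h.choose else d g

theorem mn_spec {Z : Γ × M → Prop} {d : Γ → M} {g : Γ}
    (h : ∃ m, Z (g, m) ∧ ∀ m', Z (g, m') → m ≤ m') :
    Z (g, mn Z d g) ∧ ∀ m', Z (g, m') → mn Z d g ≤ m' := by
  unfold mn
  rw [dif_pos h]
  exact h.choose_spec

theorem mx_spec {Z : Γ × M → Prop} {d : Γ → M} {g : Γ}
    (h : ∃ m, Z (g, m) ∧ ∀ m', Z (g, m') → m' ≤ m) :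
    Z (g, mx Z d g) ∧ ∀ m', Z (g, m') → m' ≤ mx Z d g := by
  unfold mx
  rw [dif_pos h]
  exact h.choose_spec

theorem mn_fin {Z : Γ × M → Prop} {d : Γ → M} {g : Γ}
    (hf : {m | Z (g, m)}.Finite) (h : ∃ m, Z (g, m)) :
    Z (g, mn Z d g) ∧ ∀ m', Z (g, m') → mn Z d g ≤ m' := by
  apply mn_spec
  obtain ⟨m, hm, hh⟩ := Set.exists_min_image _ (fun x => x) hf h
  exact ⟨m, hm, hh⟩

theorem mx_fin {Z : Γ × M → Prop} {d : Γ → M} {g : Γ}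
    (hf : {m | Z (g, m)}.Finite) (h : ∃ m, Z (g, m)) :
    Z (g, mx Z d g) ∧ ∀ m', Z (g, m') → m' ≤ mx Z d g := by
  apply mx_spec
  obtain ⟨m, hm, hh⟩ := Set.exists_max_image _ (fun x => x) hf h
  exact ⟨m, hm, hh⟩

instance DM.mn {Z : Γ × M → Prop} [hZ : Dfn L M Z] {d : Γ → M} [hd : DM L M d] :
    DM L M (mn Z d) := by
  refine DM.ofGraph ?_
  refine Dfn.congr (P := fun z : Γ × M => (Z (z.1, z.2) ∧ ∀ m', Z (z.1, m') → z.2 ≤ m') ∨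
    ((¬ ∃ m, Z (z.1, m) ∧ ∀ m', Z (z.1, m') → m ≤ m') ∧ z.2 = d z.1)) inferInstance ?_
  rintro ⟨g, t⟩
  by_cases h : ∃ m, Z (g, m) ∧ ∀ m', Z (g, m') → m ≤ m'
  · have := mn_spec (d := d) h
    simp only [h, not_true_eq_false, false_and, or_false]
    constructor
    · rintro rfl; exact this
    · intro h'
      exact le_antisymm (h'.2 _ this.1) (this.2 _ h'.1)
  · simp only [h, not_false_eq_true, true_and]
    constructor
    · intro e
      right
      simp only [e, OM.mn, dif_neg h]
    · rintro (h' | h')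
      · exact absurd ⟨t, h'⟩ h
      · simp only [h', OM.mn, dif_neg h]

instance DM.mx {Z : Γ × M → Prop} [hZ : Dfn L M Z] {d : Γ → M} [hd : DM L M d] :
    DM L M (mx Z d) := by
  refine DM.ofGraph ?_
  refine Dfn.congr (P := fun z : Γ × M => (Z (z.1, z.2) ∧ ∀ m', Z (z.1, m') → m' ≤ z.2) ∨
    ((¬ ∃ m, Z (z.1, m) ∧ ∀ m', Z (z.1, m') → m' ≤ m) ∧ z.2 = d z.1)) inferInstance ?_
  rintro ⟨g, t⟩
  by_cases h : ∃ m, Z (g, m) ∧ ∀ m', Z (g, m') → m' ≤ m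
  · have := mx_spec (d := d) h
    simp only [h, not_true_eq_false, false_and, or_false]
    constructor
    · rintro rfl; exact this
    · intro h'
      exact le_antisymm (this.2 _ h'.1) (h'.2 _ this.1)
  · simp only [h, not_false_eq_true, true_and]
    constructor
    · intro e
      right
      simp only [e, OM.mx, dif_neg h]
    · rintro (h' | h')
      · exact absurd ⟨t, h'⟩ h
      · simp only [h', OM.mx, dif_neg h]

end Sel

section FinA
variable {L : FirstOrder.Language.{u, u}} {M : Type u} [L.Structure M] [LinearOrder M] [hom : OMin L M]
variable [TopologicalSpace M] [OrderTopology M] [DenselyOrdered M] [NoMinOrder M] [NoMaxOrder M]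

theorem lcDfn {D : M → Prop} (h : Dfn L M D) : ∀ᶠ x in cofinite, LC D x := by
  rw [Filter.eventually_cofinite]
  exact (h.tm).lcFinite

theorem minLemma {Z : M × M → Prop} (hZ : Dfn L M Z) (hfin : ∀ x, {y | Z (x, y)}.Finite) :
    ∀ᶠ a in cofinite, (∀ᶠ x in 𝓝 a, ∀ y, ¬ Z (x, y)) ∨
      ∃ y0, Z (a, y0) ∧ ∀ e, e < y0 → ∀ᶠ x in 𝓝 a, ∀ y, Z (x, y) → e < y := by
  have h1 : ∀ᶠ a in cofinite, LC (fun x => ∃ y, Z (x, y)) a := lcDfn (L := L) inferInstance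
  have h2 : ∀ᶠ a in cofinite, CA (mn Z (fun x => x)) a := cont (L := L) inferInstance
  filter_upwards [h1, h2] with a ha1 ha2
  by_cases h : ∃ y, Z (a, y)
  · right
    refine ⟨mn Z (fun x => x) a, (mn_fin (hfin a) h).1, fun e he => ?_⟩
    filter_upwards [(ha2 e).1 he] with x hx y hy
    exact hx.trans_le ((mn_fin (hfin x) ⟨y, hy⟩).2 y hy)
  · left
    unfold LC at ha1
    filter_upwards [ha1] with x hx y hy
    exact h (hx.mp ⟨y, hy⟩)

theorem maxLemma {Z : M × M → Prop} (hZ : Dfn L M Z) (hfin : ∀ x, {y | Z (x, y)}.Finite) :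
    ∀ᶠ a in cofinite, (∀ᶠ x in 𝓝 a, ∀ y, ¬ Z (x, y)) ∨
      ∃ y0, Z (a, y0) ∧ ∀ e, y0 < e → ∀ᶠ x in 𝓝 a, ∀ y, Z (x, y) → y < e := by
  have h1 : ∀ᶠ a in cofinite, LC (fun x => ∃ y, Z (x, y)) a := lcDfn (L := L) inferInstance
  have h2 : ∀ᶠ a in cofinite, CA (mx Z (fun x => x)) a := cont (L := L) inferInstance
  filter_upwards [h1, h2] with a ha1 ha2
  by_cases h : ∃ y, Z (a, y)
  · right
    refine ⟨mx Z (fun x => x) a, (mx_fin (hfin a) h).1, fun e he => ?_⟩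
    filter_upwards [(ha2 e).2 he] with x hx y hy
    exact ((mx_fin (hfin x) ⟨y, hy⟩).2 y hy).trans_lt hx
  · left
    unfold LC at ha1
    filter_upwards [ha1] with x hx y hy
    exact h (hx.mp ⟨y, hy⟩)

/-- box without points -/
def N0 (Y : M × M → Prop) (a b : M) : Prop :=
  ∃ c d, c < b ∧ b < d ∧ ∀ᶠ x in 𝓝 a, ∀ y, c < y → y < d → ¬ Y (x, y)

/-- box with one point in each fiber -/
def N1 (Y : M × M → Prop) (a b : M) : Prop :=
  Y (a, b) ∧ (∃ c d, c < b ∧ b < d ∧ ∀ᶠ x in 𝓝 a, ∀ y y', c < y → y < d → c < y' → y' < d →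
    Y (x, y) → Y (x, y') → y = y') ∧
  ∀ c d, c < b → b < d → ∀ᶠ x in 𝓝 a, ∃ y, c < y ∧ y < d ∧ Y (x, y)

/-- good points -/
def Good (Y : M × M → Prop) (a : M) : Prop :=
  ((∃ c, ∀ᶠ x in 𝓝 a, ∀ y, y < c → ¬ Y (x, y)) ∧ (∃ c, ∀ᶠ x in 𝓝 a, ∀ y, c < y → ¬ Y (x, y))) ∧
  ∀ b, N0 Y a b ∨ N1 Y a b

theorem norm_open {Y : M × M → Prop} {a b : M} (h : N0 Y a b ∨ N1 Y a b) :
    ∀ᶠ b' in 𝓝 b, N0 Y a b' ∨ N1 Y a b' := by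
  rcases h with ⟨c, d, h1, h2, h3⟩ | ⟨h1, ⟨c, d, hc, hd, h2⟩, h3⟩
  · exact ev_nhds.2 ⟨c, d, h1, h2, fun b' p q => Or.inl ⟨c, d, p, q, h3⟩⟩
  · refine ev_nhds.2 ⟨c, d, hc, hd, fun b' p q => ?_⟩
    rcases lt_trichotomy b b' with h | h | h
    · left
      obtain ⟨e, he1, he2⟩ := exists_between h
      refine ⟨e, d, he2, q, ?_⟩
      filter_upwards [h2, h3 c e hc he1] with x hx ⟨y, hy1, hy2, hy3⟩ y' s1 s2 s3
      have := hx y y' hy1 (hy2.trans (he2.trans q)) (hc.trans (he1.trans s1)) s2 hy3 s3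
      exact absurd (this ▸ hy2) (lt_asymm s1)
    · right
      rw [← h]; exact ⟨h1, ⟨c, d, hc, hd, h2⟩, h3⟩
    · left
      obtain ⟨e, he1, he2⟩ := exists_between h
      refine ⟨c, e, p, he1, ?_⟩
      filter_upwards [h2, h3 e d he2 hd] with x hx ⟨y, hy1, hy2, hy3⟩ y' s1 s2 s3
      have := hx y y' (p.trans (he1.trans hy1)) hy2 s1 (s2.trans (he2.trans hd)) hy3 s3
      exact absurd (this ▸ hy1) (lt_asymm s2)

theorem goodCof {Y : M × M → Prop} (hY : Dfn L M Y) (hfin : ∀ x, {y | Y (x, y)}.Finite) :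
    ∀ᶠ a in cofinite, Good Y a := by
  have hNB : ∀ᶠ a in cofinite, ∃ c, ∀ᶠ x in 𝓝 a, ∀ y, y < c → ¬ Y (x, y) := by
    filter_upwards [minLemma hY hfin] with a ha
    rcases ha with h | ⟨y0, _, h⟩
    · exact ⟨a, by filter_upwards [h] with x hx y _ using hx y⟩
    · obtain ⟨e, he⟩ := exists_lt y0
      exact ⟨e, by filter_upwards [h e he] with x hx y hy hY using lt_asymm hy (hx y hY)⟩
  have hNT : ∀ᶠ a in cofinite, ∃ c, ∀ᶠ x in 𝓝 a, ∀ y, c < y → ¬ Y (x, y) := by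
    filter_upwards [maxLemma hY hfin] with a ha
    rcases ha with h | ⟨y0, _, h⟩
    · exact ⟨a, by filter_upwards [h] with x hx y _ using hx y⟩
    · obtain ⟨e, he⟩ := exists_gt y0
      exact ⟨e, by filter_upwards [h e he] with x hx y hy hY using lt_asymm hy (hx y hY)⟩
  refine (hNB.and hNT).and ?_
  let Bd : M × M → Prop := fun z => ¬ (N0 Y z.1 z.2 ∨ N1 Y z.1 z.2)
  have hBd : Dfn L M Bd := by
    show Dfn L M (fun z : M × M => ¬ (N0 Y z.1 z.2 ∨ N1 Y z.1 z.2))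
    unfold N0 N1; infer_instance
  refine Tm.cofinite (Dfn.tm (L := L) (by unfold N0 N1; infer_instance)) fun u v huv => ?_
  by_contra hno
  push Not at hno
  have hbad : ∀ a, u < a → a < v → ∃ b, Bd (a, b) := by
    intro a h1 h2
    obtain ⟨b, hb⟩ := hno a h1 h2
    exact ⟨b, by simp only [Bd]; tauto⟩
  let β : M → M := mn Bd (fun x => x)
  have hβ : DM L M β := inferInstanceAs (DM L M (mn Bd (fun x => x)))
  let Zp : M × M → Prop := fun z => Y (z.1, z.2) ∧ β z.1 < z.2
  let Zm : M × M → Prop := fun z => Y (z.1, z.2) ∧ z.2 < β z.1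
  have hZp : Dfn L M Zp := inferInstanceAs (Dfn L M (fun z : M × M => Y (z.1, z.2) ∧ β z.1 < z.2))
  have hZm : Dfn L M Zm := inferInstanceAs (Dfn L M (fun z : M × M => Y (z.1, z.2) ∧ z.2 < β z.1))
  have hYb : Dfn L M (fun x => Y (x, β x)) := inferInstance
  have c1 := cont hβ
  have c2 := minLemma hZp (fun x => (hfin x).subset fun y hy => hy.1)
  have c3 := maxLemma hZm (fun x => (hfin x).subset fun y hy => hy.1)
  have c4 := lcDfn hYb
  obtain ⟨a, hua, hav, ⟨c0, hNBa⟩, hCA, hZpa, hZma, hLC⟩ :=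
    cof_dense (hNB.and (c1.and (c2.and (c3.and c4)))) huv
  have hleast : ∃ m, Bd (a, m) ∧ ∀ m', Bd (a, m') → m ≤ m' := by
    obtain ⟨b, hb⟩ := hbad a hua hav
    have hlow : ∀ b', b' < c0 → ¬ Bd (a, b') := by
      intro b' hb' hB
      obtain ⟨c, hc⟩ := exists_lt b'
      refine hB (Or.inl ⟨c, c0, hc, hb', ?_⟩)
      filter_upwards [hNBa] with x hx y _ hy using hx y hy
    have htm : Tm (fun z => ∃ b', b' ≤ z ∧ Bd (a, b')) := Dfn.tm (L := L) inferInstance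
    obtain ⟨l, hl⟩ := exists_lt c0
    obtain ⟨z, _, _, hE, hnE⟩ := htm.inf (a := l) (b := b)
      (fun x y hxy ⟨b', h1, h2⟩ => ⟨b', h1.trans hxy, h2⟩)
      (fun ⟨b', h1, h2⟩ => hlow b' (h1.trans_lt hl) h2) ⟨b, le_rfl, hb⟩
    have hz : ∀ m', Bd (a, m') → z ≤ m' := by
      intro m' hm'
      by_contra hc
      exact hnE m' (not_le.1 hc) ⟨m', le_rfl, hm'⟩
    refine ⟨z, ?_, hz⟩
    by_contra hzn
    obtain ⟨p, q, hp, hq, hpq⟩ := ev_nhds.1 (norm_open (a := a) (b := z) hzn)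
    obtain ⟨y, hy1, hy2⟩ := exists_between hq
    obtain ⟨b', h1, h2⟩ := hE y hy1
    exact h2 (hpq b' (hp.trans_le (hz b' h2)) (h1.trans_lt hy2))
  have hbb : Bd (a, β a) := (mn_spec hleast).1
  obtain ⟨d, hd, hd'⟩ : ∃ d, β a < d ∧ ∀ᶠ x in 𝓝 a, ∀ y, Y (x, y) → β x < y → d < y := by
    rcases hZpa with h | ⟨y0, hy0, h⟩
    · obtain ⟨d, hd⟩ := exists_gt (β a)
      exact ⟨d, hd, by filter_upwards [h] with x hx y h1 h2 using absurd ⟨h1, h2⟩ (hx y)⟩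
    · obtain ⟨d, hd1, hd2⟩ := exists_between hy0.2
      exact ⟨d, hd1, by filter_upwards [h d hd2] with x hx y h1 h2 using hx y ⟨h1, h2⟩⟩
  obtain ⟨c, hc, hc'⟩ : ∃ c, c < β a ∧ ∀ᶠ x in 𝓝 a, ∀ y, Y (x, y) → y < β x → y < c := by
    rcases hZma with h | ⟨y0, hy0, h⟩
    · obtain ⟨d, hd⟩ := exists_lt (β a)
      exact ⟨d, hd, by filter_upwards [h] with x hx y h1 h2 using absurd ⟨h1, h2⟩ (hx y)⟩
    · obtain ⟨d, hd1, hd2⟩ := exists_between hy0.2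
      exact ⟨d, hd2, by filter_upwards [h d hd1] with x hx y h1 h2 using hx y ⟨h1, h2⟩⟩
  have huniq : ∀ᶠ x in 𝓝 a, ∀ y, c < y → y < d → Y (x, y) → y = β x := by
    filter_upwards [hd', hc'] with x h1 h2 y p1 p2 p3
    rcases lt_trichotomy y (β x) with h | h | h
    · exact absurd (h2 y p3 h) (lt_asymm p1)
    · exact h
    · exact absurd (h1 y p3 h) (lt_asymm p2)
  apply hbb
  unfold LC at hLC
  by_cases hYab : Y (a, β a)
  · right
    refine ⟨hYab, ⟨c, d, hc, hd, ?_⟩, fun c' d' h1 h2 => ?_⟩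
    · filter_upwards [huniq] with x hx y y' s1 s2 s3 s4 s5 s6
      rw [hx y s1 s2 s5, hx y' s3 s4 s6]
    · filter_upwards [(hCA c').1 h1, (hCA d').2 h2, hLC] with x q1 q2 q3
      exact ⟨β x, q1, q2, q3.mpr hYab⟩
  · left
    refine ⟨c, d, hc, hd, ?_⟩
    filter_upwards [huniq, hLC] with x hx hx2 y p q r
    have := hx y p q r
    subst this
    exact hYab (hx2.mp r)

theorem compactLemma {Y : M × M → Prop} (hY : Dfn L M Y) {a e1 e2 : M}
    (h : ∀ y, e1 ≤ y → y ≤ e2 → N0 Y a y) :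
    ∀ᶠ x in 𝓝 a, ∀ y, e1 ≤ y → y ≤ e2 → ¬ Y (x, y) := by
  rcases lt_or_ge e2 e1 with h0 | h0
  · exact Filter.Eventually.of_forall fun x y p q => absurd (p.trans q) (not_le.2 h0)
  by_contra hc
  have htm : Tm (fun z => ∀ᶠ x in 𝓝 a, ∀ y, e1 ≤ y → y ≤ z → ¬ Y (x, y)) :=
    Dfn.tm (L := L) inferInstance
  obtain ⟨z, hz1, hz2, hE, hnE⟩ := htm.sup (a := e1) (b := e2)
    (fun x y hxy hy => by
      filter_upwards [hy] with t ht s p q using ht s p (q.trans hxy))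
    (by
      obtain ⟨c, d, h1, h2, h3⟩ := h e1 le_rfl h0
      filter_upwards [h3] with x hx y p q using hx y (h1.trans_le p) (q.trans_lt h2)) hc
  obtain ⟨c, d, h1, h2, h3⟩ := h z hz1 hz2
  obtain ⟨c', hc1, hc2⟩ := exists_between h1
  obtain ⟨d', hd1, hd2⟩ := exists_between h2
  refine hnE d' hd1 ?_
  filter_upwards [h3, hE c' hc2] with x q1 q2 y p1 p2
  rcases le_or_gt y c' with q | q
  · exact q2 y p1 q
  · exact q1 y (hc1.trans q) (p2.trans_lt hd2)

theorem goodLC {Y : M × M → Prop} (hY : Dfn L M Y) (hfin : ∀ x, {y | Y (x, y)}.Finite) {a : M}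
    (hG : Good Y a) : LC (fun x => {y | Y (x, y)}.ncard) a := by
  obtain ⟨⟨⟨cB, hNB⟩, ⟨cT, hNT⟩⟩, hN⟩ := hG
  have hn0 : ∀ y, ¬ Y (a, y) → N0 Y a y := fun y hy => (hN y).resolve_right fun h => hy h.1
  have hn1 : ∀ y, Y (a, y) → N1 Y a y := fun y hy => (hN y).resolve_left
    fun ⟨c, d, h1, h2, h3⟩ => h3.self_of_nhds y h1 h2 hy
  have main : ∀ n : ℕ, ∀ e, ¬ Y (a, e) → {y | Y (a, y) ∧ e < y}.ncard = n →
      ∀ᶠ x in 𝓝 a, {y | Y (x, y) ∧ e < y}.ncard = n := by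
    intro n
    induction n with
    | zero =>
      intro e he hc
      have hf : {y | Y (a, y) ∧ e < y}.Finite := (hfin a).subset fun y hy => hy.1
      have hemp : {y | Y (a, y) ∧ e < y} = ∅ := (Set.ncard_eq_zero hf).1 hc
      have hno : ∀ y, e ≤ y → ¬ Y (a, y) := by
        intro y hy hYy
        rcases hy.eq_or_lt with rfl | hlt
        · exact he hYy
        · have : y ∈ {y | Y (a, y) ∧ e < y} := ⟨hYy, hlt⟩
          rw [hemp] at this; exact this
      filter_upwards [hNT, compactLemma hY (e1 := e) (e2 := cT) (fun y p _ => hn0 y (hno y p))]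
        with x h1 h2
      have : {y | Y (x, y) ∧ e < y} = ∅ := by
        ext y
        simp only [mem_ofPred_eq, mem_empty_iff_false, iff_false]
        rintro ⟨p, q⟩
        rcases le_or_gt y cT with r | r
        · exact h2 y q.le r p
        · exact h1 y r p
      rw [this, Set.ncard_empty]
    | succ n ih =>
      intro e he hc
      have hf : {y | Y (a, y) ∧ e < y}.Finite := (hfin a).subset fun y hy => hy.1
      have hne : {y | Y (a, y) ∧ e < y}.Nonempty := by
        rw [← Set.ncard_pos hf]; omega
      obtain ⟨b, hb, hbmin⟩ := Set.exists_min_image _ (fun x => x) hf hne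
      obtain ⟨_, ⟨c, d, hcb, hbd, hun⟩, hex⟩ := hn1 b hb.1
      obtain ⟨c', hc1, hc2⟩ := exists_between (max_lt hcb hb.2)
      obtain ⟨hcc', hec'⟩ := max_lt_iff.1 hc1
      obtain ⟨e', he1, he2⟩ := exists_between hbd
      have ha := hun.self_of_nhds
      have step : ∀ x, (∀ y y', c < y → y < d → c < y' → y' < d → Y (x, y) → Y (x, y') → y = y') →
          (∃ y, c' < y ∧ y < e' ∧ Y (x, y)) → (∀ y, e ≤ y → y ≤ c' → ¬ Y (x, y)) →
          {y | Y (x, y) ∧ e < y}.ncard = {y | Y (x, y) ∧ e' < y}.ncard + 1 := by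
        rintro x h1 ⟨y0, p1, p2, p3⟩ h2
        have : {y | Y (x, y) ∧ e < y} = insert y0 {y | Y (x, y) ∧ e' < y} := by
          ext y
          simp only [mem_ofPred_eq, mem_insert_iff]
          constructor
          · rintro ⟨q1, q2⟩
            rcases lt_or_ge e' y with r | r
            · exact Or.inr ⟨q1, r⟩
            · rcases le_or_gt y c' with r' | r'
              · exact absurd q1 (h2 y q2.le r')
              · exact Or.inl (h1 y y0 (hcc'.trans r') (r.trans_lt he2) (hcc'.trans p1)
                  (p2.trans he2) q1 p3)
          · rintro (rfl | ⟨q1, q2⟩)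
            · exact ⟨p3, hec'.trans p1⟩
            · exact ⟨q1, (hec'.trans (hc2.trans he1)).trans q2⟩
        rw [this, Set.ncard_insert_of_notMem (fun h => lt_asymm h.2 p2)
          ((hfin x).subset fun y hy => hy.1)]
      have hno : ∀ y, e ≤ y → y ≤ c' → ¬ Y (a, y) := by
        intro y h1 h2 hYy
        rcases h1.eq_or_lt with rfl | hlt
        · exact he hYy
        · exact absurd (hbmin y ⟨hYy, hlt⟩) (not_le.2 (h2.trans_lt hc2))
      have hsa := step a ha ⟨b, hc2, he1, hb.1⟩ hno
      have he' : ¬ Y (a, e') := by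
        intro h
        exact he1.ne (ha b e' hcb hbd (hcb.trans he1) he2 hb.1 h)
      filter_upwards [ih e' he' (by omega), hun, hex c' e' hc2 he1,
        compactLemma hY (fun y p q => hn0 y (hno y p q))] with x q1 q2 q3 q4
      rw [step x q2 q3 q4, q1]
  obtain ⟨e, he⟩ := exists_lt cB
  have hall : ∀ x, (∀ y, y < cB → ¬ Y (x, y)) → {y | Y (x, y)} = {y | Y (x, y) ∧ e < y} := by
    intro x hx
    ext y
    simp only [mem_ofPred_eq]
    refine ⟨fun h => ⟨h, ?_⟩, fun h => h.1⟩
    by_contra hc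
    exact hx y ((not_lt.1 hc).trans_lt he) h
  have := main _ e (hNB.self_of_nhds e he) rfl
  unfold LC
  filter_upwards [this, hNB] with x h1 h2
  rw [hall x h2, h1, ← hall a hNB.self_of_nhds]

end FinA

section Count
variable {L : FirstOrder.Language.{u, u}} {M : Type u} [L.Structure M] [LinearOrder M] [hom : OMin L M]

theorem dfnCard (j : ℕ) : ∀ (Γ : Type u) [Ctx M Γ] (Y : Γ × M → Prop), Dfn L M Y →
    (∀ g, {m | Y (g, m)}.Finite) → Dfn L M (fun g => j ≤ {m | Y (g, m)}.ncard) := by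
  induction j with
  | zero =>
    intro Γ _ Y hY hf
    exact (Dfn.cst True).congr (fun g => by simp)
  | succ j ih =>
    intro Γ _ Y hY hf
    have h1 := ih (Γ × M) (fun z => Y (z.1.1, z.2) ∧ z.2 ≠ z.1.2) inferInstance
      (fun g => (hf g.1).subset fun m hm => hm.1)
    have h2 : Dfn L M (fun g : Γ => ∃ m : M, Y (g, m) ∧
      j ≤ {m' | Y (g, m') ∧ m' ≠ m}.ncard) := by
      have h3 : Dfn L M (fun z : Γ × M => Y (z.1, z.2) ∧
        j ≤ {m' | Y (z.1, m') ∧ m' ≠ z.2}.ncard) := @Dfn.and _ _ _ _ _ _ _ _ h1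
      exact Dfn.ex
    refine h2.congr fun g => ?_
    have key : ∀ m, Y (g, m) → {m | Y (g, m)}.ncard = {m' | Y (g, m') ∧ m' ≠ m}.ncard + 1 := by
      intro m hm
      have : {m' | Y (g, m') ∧ m' ≠ m} = {m | Y (g, m)} \ {m} := by
        ext x; simp
      rw [this, Set.ncard_sdiff_singleton_add_one (a := m) (s := {m | Y (g, m)}) hm (hf g)]
    constructor
    · intro h
      have hne : {m | Y (g, m)}.Nonempty := by
        rw [← Set.ncard_pos (hf g)]; omega
      obtain ⟨m, hm⟩ := hne
      refine ⟨m, hm, ?_⟩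
      have := key m hm
      omega
    · rintro ⟨m, hm, h⟩
      have := key m hm
      omega

theorem dfnCardEq {Γ : Type u} [Ctx M Γ] {Y : Γ × M → Prop} (hY : Dfn L M Y)
    (hf : ∀ g, {m | Y (g, m)}.Finite) (s : ℕ) : Dfn L M (fun g => {m | Y (g, m)}.ncard = s) := by
  have h1 := dfnCard s Γ Y hY hf
  have h2 := dfnCard (s + 1) Γ Y hY hf
  have h3 : Dfn L M (fun g => s ≤ {m | Y (g, m)}.ncard ∧ ¬ (s + 1 ≤ {m | Y (g, m)}.ncard)) :=
    @Dfn.and _ _ _ _ _ _ _ h1 (@Dfn.not _ _ _ _ _ _ h2)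
  exact h3.congr fun g => by omega

variable [TopologicalSpace M] [OrderTopology M] [DenselyOrdered M] [NoMinOrder M] [NoMaxOrder M]

theorem uf1 {Y : M × M → Prop} (hY : Dfn L M Y) (hf : ∀ g, {m | Y (g, m)}.Finite) :
    ∃ N, ∀ x, {m | Y (x, m)}.ncard ≤ N := by
  have := finite_range_of_lc (fun x => {m | Y (x, m)}.ncard)
    (fun s => (dfnCardEq hY hf s).tm) (by
      filter_upwards [goodCof hY hf] with a ha using goodLC hY hf ha)
  obtain ⟨N, hN⟩ := this.bddAbove
  exact ⟨N, fun x => hN ⟨x, rfl⟩⟩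

theorem fub1 {B : M × M → Prop} (hB : Dfn L M B)
    (huniq : ∀ r q q', B (q, r) → B (q', r) → q = q') :
    {q | {r | B (q, r)}.Infinite}.Finite := by
  have hd0 : Dfn L M (fun r : M => ¬ ∃ q : M, ∀ᶠ r' in 𝓝 r, B (q, r')) := inferInstance
  have hd1 : ∀ q : M, Dfn L M (fun r : M => ∀ᶠ r' in 𝓝 r, B (q, r')) := fun q => inferInstance
  classical
  let k : M → Option M := fun r =>
    if h : ∃ q, ∀ᶠ r' in 𝓝 r, B (q, r') then some h.choose else none
  have hsome : ∀ r q, k r = some q ↔ ∀ᶠ r' in 𝓝 r, B (q, r') := by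
    intro r q
    by_cases h : ∃ q, ∀ᶠ r' in 𝓝 r, B (q, r')
    · simp only [k, dif_pos h, Option.some.injEq]
      constructor
      · rintro rfl; exact h.choose_spec
      · intro h'
        exact huniq r _ _ h.choose_spec.self_of_nhds h'.self_of_nhds
    · simp only [k, dif_neg h, reduceCtorEq, false_iff]
      exact fun h' => h ⟨q, h'⟩
  have hnone : ∀ r, k r = none ↔ ¬ ∃ q, ∀ᶠ r' in 𝓝 r, B (q, r') := by
    intro r
    by_cases h : ∃ q, ∀ᶠ r' in 𝓝 r, B (q, r')
    · simp only [k, dif_pos h, reduceCtorEq, h, not_true_eq_false]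
    · simp only [k, dif_neg h, h, not_false_eq_true]
  have hdn : Dfn L M (fun r => k r = none) :=
    hd0.congr hnone
  have hfr := finite_range_of_lc k (fun s => by
    cases s with
    | none => exact hdn.tm
    | some q =>
      exact ((hd1 q).congr (fun r => hsome r q)).tm) (by
    filter_upwards [lcDfn hdn] with r hr
    unfold LC at hr ⊢
    cases hk : k r with
    | none =>
      filter_upwards [hr] with y hy
      exact hy.mpr hk
    | some q =>
      have := (hsome r q).1 hk
      filter_upwards [this.eventually_nhds] with y hy
      exact (hsome y q).2 hy)
  refine (hfr.preimage (f := some) (Option.some_injective _).injOn).subset ?_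
  intro q hq
  obtain ⟨u, v, huv, hh⟩ := (Dfn.tm (L := L) (D := fun r => B (q, r)) inferInstance).interval hq
  obtain ⟨r, h1, h2⟩ := exists_between huv
  exact ⟨r, (hsome r q).2 (ev_nhds.2 ⟨u, v, h1, h2, hh⟩)⟩

theorem fub {B : M × M → Prop} (hB : Dfn L M B) (hf : ∀ r, {q | B (q, r)}.Finite) :
    {q | {r | B (q, r)}.Infinite}.Finite := by
  obtain ⟨N, hN⟩ := uf1 (L := L) (Y := fun z : M × M => B (z.2, z.1)) inferInstance hf
  induction N generalizing B with
  | zero =>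
    convert Set.finite_empty
    ext q
    simp only [mem_ofPred_eq, mem_empty_iff_false, iff_false, Set.not_infinite]
    convert Set.finite_empty
    ext r
    simp only [mem_ofPred_eq, mem_empty_iff_false, iff_false]
    intro h
    have := (Set.ncard_eq_zero (hf r)).1 (Nat.le_zero.1 (hN r))
    have h' : q ∈ {q | B (q, r)} := h
    rw [this] at h'
    exact h'
  | succ N ih =>
    let e : M → M := mn (fun z : M × M => B (z.2, z.1)) (fun x => x)
    have he : DM L M e :=
      inferInstanceAs (DM L M (mn (fun z : M × M => B (z.2, z.1)) (fun x => x)))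
    have h1 := fub1 (L := L) (B := fun z : M × M => B (z.1, z.2) ∧ z.1 = e z.2) inferInstance
      (fun r q q' a b => a.2.trans b.2.symm)
    have h2 := ih (B := fun z : M × M => B (z.1, z.2) ∧ z.1 ≠ e z.2) inferInstance
      (fun r => (hf r).subset fun q hq => hq.1) (fun r => by
        by_cases hne : ∃ q, B (q, r)
        · have hm := (mn_fin (Z := fun z : M × M => B (z.2, z.1)) (d := fun x => x) (hf r) hne).1
          have heq : {q | B (q, r) ∧ q ≠ e r} = {q | B (q, r)} \ {e r} := by
            ext x; simp
          have := Set.ncard_sdiff_singleton_add_one (a := e r) (s := {q | B (q, r)}) hm (hf r)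
          have h3 := hN r
          simp only [heq]
          simp only at h3
          omega
        · have heq : {q | B (q, r) ∧ q ≠ e r} = ∅ := by
            ext x
            simp only [mem_ofPred_eq, mem_empty_iff_false, iff_false]
            exact fun h => hne ⟨x, h.1⟩
          simp [heq])
    refine (h1.union h2).subset fun q hq => ?_
    by_contra hc
    simp only [mem_union, mem_ofPred_eq, not_or, Set.not_infinite] at hc
    refine hq ((hc.1.union hc.2).subset fun r hr => ?_)
    by_cases h : q = e r
    · exact Or.inl ⟨hr, h⟩
    · exact Or.inr ⟨hr, h⟩

end Count

section SysSec
variable {L : FirstOrder.Language.{u, u}} {M : Type u} [L.Structure M] [LinearOrder M] [hom : OMin L M]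
variable [TopologicalSpace M] [OrderTopology M] [DenselyOrdered M] [NoMinOrder M] [NoMaxOrder M]
variable {Γ Γ' : Type u} [Ctx M Γ] [Ctx M Γ']

variable (L M) in
/-- hereditarily piecewise constant functions -/
def Sys (k : Γ → ℕ) : Prop :=
  (∀ s, Dfn L M (fun g => k g = s)) ∧
  ∀ (Δ : Type u) [Ctx M Δ] (F : Δ × M → Γ), DM L M F →
    ∃ B : Δ × M → Prop, Dfn L M B ∧ (∀ δ, {q | B (δ, q)}.Finite) ∧
      ∀ δ q, ¬ B (δ, q) → LC (fun q' => k (F (δ, q'))) q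

theorem Sys.comp {k : Γ → ℕ} (hk : Sys L M k) {h : Γ' → Γ} (hh : DM L M h) :
    Sys L M (fun g => k (h g)) := by
  refine ⟨fun s => DM.subst (hk.1 s) hh, fun Δ _ F hF => ?_⟩
  exact hk.2 Δ (fun z => h (F z)) (DM.comp hh hF)

theorem Sys.ncard {Y : Γ × M → Prop} (hY : Dfn L M Y) (hf : ∀ g, {m | Y (g, m)}.Finite) :
    Sys L M (fun g => {m | Y (g, m)}.ncard) := by
  refine ⟨dfnCardEq hY hf, fun Δ _ F hF => ?_⟩
  refine ⟨fun z => ¬ Good (fun p : M × M => Y (F (z.1, p.1), p.2)) z.2, ?_, fun δ => ?_,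
    fun δ q hq => ?_⟩
  · unfold Good N0 N1
    infer_instance
  · have := goodCof (L := L) (Y := fun p : M × M => Y (F (δ, p.1), p.2)) inferInstance
      (fun x => hf (F (δ, x)))
    rwa [Filter.eventually_cofinite] at this
  · exact goodLC (L := L) (Y := fun p : M × M => Y (F (δ, p.1), p.2)) inferInstance
      (fun x => hf (F (δ, x))) (not_not.1 hq)

open Classical in
/-- the constant value on the fibers of `U` -/
noncomputable def kU (k : Γ × M → ℕ) (U : Γ × M → Prop) (p : Γ) : ℕ :=
  if h : ∃ q, U (p, q) then k (p, h.choose) else 0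

theorem kU_eq {k : Γ × M → ℕ} {U : Γ × M → Prop}
    (hc : ∀ p q q', U (p, q) → U (p, q') → k (p, q) = k (p, q')) {p : Γ} {q : M} (h : U (p, q)) :
    kU k U p = k (p, q) := by
  have h' : ∃ q, U (p, q) := ⟨q, h⟩
  unfold kU
  rw [dif_pos h']
  exact hc p _ _ h'.choose_spec h

theorem kU_zero {k : Γ × M → ℕ} {U : Γ × M → Prop} {p : Γ} (h : ¬ ∃ q, U (p, q)) :
    kU k U p = 0 := by
  unfold kU
  rw [dif_neg h]

theorem Sys.kU {k : Γ × M → ℕ} (hk : Sys L M k) {U : Γ × M → Prop} (hU : Dfn L M U)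
    (ho : ∀ p q, U (p, q) → ∀ᶠ q' in 𝓝 q, U (p, q'))
    (hc : ∀ p q q', U (p, q) → U (p, q') → k (p, q) = k (p, q')) :
    Sys L M (kU k U) := by
  constructor
  · intro s
    have hks : Dfn L M (fun z : Γ × M => k z = s) := hk.1 s
    have h1 : Dfn L M (fun z : Γ × M => U (z.1, z.2) ∧ k (z.1, z.2) = s) :=
      @Dfn.and _ _ _ _ _ _ _ inferInstance (DM.subst hks (f := fun z : Γ × M => (z.1, z.2)) inferInstance)
    have h2 : Dfn L M (fun p : Γ => ∃ q : M, U (p, q) ∧ k (p, q) = s) := Dfn.ex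
    have h3 : Dfn L M (fun p : Γ => (∃ q : M, U (p, q) ∧ k (p, q) = s) ∨
      ((¬ ∃ q : M, U (p, q)) ∧ (0 = s))) := inferInstance
    refine h3.congr fun p => ?_
    by_cases h : ∃ q, U (p, q)
    · simp only [h, not_true_eq_false, false_and, or_false]
      constructor
      · intro he
        obtain ⟨q, hq⟩ := h
        exact ⟨q, hq, (kU_eq hc hq).symm.trans he⟩
      · rintro ⟨q, hq, he⟩
        exact (kU_eq hc hq).trans he
    · simp only [h, not_false_eq_true, true_and, kU_zero h]
      constructor
      · exact Or.inr
      · rintro (⟨q, hq, _⟩ | h')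
        · exact absurd ⟨q, hq⟩ h
        · exact h'
  · intro Δ _ F hF
    obtain ⟨B', hB', hB'f, hB'lc⟩ := hk.2 (Δ × M)
      (fun z : (Δ × M) × M => (F (z.1.1, z.2), z.1.2)) inferInstance
    have hd1 : Dfn L M (fun z : Δ × M => ∀ᶠ q' : M in 𝓝 z.2, ∀ r : M, ¬ U (F (z.1, q'), r)) :=
      inferInstance
    have hd2 : Dfn L M (fun z : (Δ × M) × M => U (F (z.1.1, z.1.2), z.2)) := inferInstance
    have hd3 : Dfn L M (fun z : (Δ × M) × M => ∀ᶠ q' : M in 𝓝 z.1.2, U (F (z.1.1, q'), z.2)) :=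
      inferInstance
    have hd4 : Dfn L M (fun z : (Δ × M) × M => ¬ B' ((z.1.1, z.2), z.1.2)) := inferInstance
    have hd5 : Dfn L M (fun z : Δ × M => ∃ r : M, U (F (z.1, z.2), r) ∧
        (∀ᶠ q' : M in 𝓝 z.2, U (F (z.1, q'), r)) ∧ ¬ B' ((z.1, r), z.2)) := inferInstance
    refine ⟨fun z : Δ × M => ¬ ((∀ᶠ q' in 𝓝 z.2, ∀ r, ¬ U (F (z.1, q'), r)) ∨
      ∃ r, U (F (z.1, z.2), r) ∧ (∀ᶠ q' in 𝓝 z.2, U (F (z.1, q'), r)) ∧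
        ¬ B' ((z.1, r), z.2)), inferInstance, fun δ => ?_, fun δ q hq => ?_⟩
    · have hfub := fub (L := L) (B := fun z : M × M => (U (F (δ, z.1), z.2) ∧
        ¬ ∀ᶠ q' in 𝓝 z.1, U (F (δ, q'), z.2)) ∨ B' ((δ, z.2), z.1)) inferInstance (fun r => by
          refine ((Dfn.tm (L := L) (D := fun q => U (F (δ, q), r)) inferInstance).lcFinite.union
            (hB'f (δ, r))).subset ?_
          rintro q (⟨h1, h2⟩ | h)
          · left
            intro hlc
            apply h2
            unfold LC at hlc
            filter_upwards [hlc] with q' hq'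
            exact hq'.mpr h1
          · exact Or.inr h)
      have hne : ∀ᶠ q in cofinite, LC (fun q => ∃ r, U (F (δ, q), r)) q :=
        lcDfn (L := L) inferInstance
      rw [Filter.eventually_cofinite] at hne
      refine (hfub.union hne).subset fun q hq => ?_
      by_contra hcon
      simp only [mem_union, mem_ofPred_eq, not_or, Set.not_infinite, not_not] at hcon
      obtain ⟨hc1, hc2⟩ := hcon
      apply hq
      by_cases hr : ∃ r, U (F (δ, q), r)
      · right
        have hinf : {r | U (F (δ, q), r)}.Infinite := by
          obtain ⟨r, hr⟩ := hr
          obtain ⟨u, v, hu, hv, huv⟩ := ev_nhds.1 (ho _ _ hr)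
          exact (Set.Ioo_infinite (hu.trans hv)).mono fun x hx => huv x hx.1 hx.2
        obtain ⟨r, hr1, hr2⟩ := hinf.exists_notMem_finite hc1
        simp only [mem_ofPred_eq, not_or, not_and, not_not] at hr2
        exact ⟨r, hr1, hr2.1 hr1, hr2.2⟩
      · left
        unfold LC at hc2
        filter_upwards [hc2] with q' hq' r hr'
        exact hr (hq'.mp ⟨r, hr'⟩)
    · rcases not_not.1 hq with h | ⟨r, h1, h2, h3⟩
      · have h0 := h.self_of_nhds
        unfold LC
        filter_upwards [h] with q' hq'
        rw [kU_zero (fun ⟨r, hr⟩ => hq' r hr), kU_zero (fun ⟨r, hr⟩ => h0 r hr)]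
      · have := hB'lc (δ, r) q h3
        unfold LC at this ⊢
        filter_upwards [this, h2] with q' e1 e2
        rw [kU_eq hc e2, kU_eq hc h1]
        exact e1

variable (L M) in
/-- uniform boundedness over a context -/
def TT (Γ : Type u) [Ctx M Γ] : Prop := ∀ k : Γ → ℕ, Sys L M k → ∃ N, ∀ g, k g ≤ N

theorem TT.prod (hT : TT L M Γ) : TT L M (Γ × M) := by
  intro k hk
  rcases isEmpty_or_nonempty M with hM | ⟨⟨m0⟩⟩
  · exact ⟨0, fun g => hM.elim g.2⟩
  obtain ⟨B, hB, hBf, hlc⟩ := hk.2 Γ (fun z => z) inferInstance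
  obtain ⟨K, hK⟩ := hT _ (Sys.ncard hB hBf)
  have hkd : ∀ p s, Tm (fun q => k (p, q) = s) := by
    intro p s
    have := hk.1 s
    exact Dfn.tm (DM.subst (hk.1 s) (f := fun q : M => (p, q)) inferInstance)
  have main : ∀ K : ℕ, ∀ V : Γ × M → Prop, Dfn L M V →
      (∀ p q, V (p, q) → ∀ᶠ q' in 𝓝 q, V (p, q')) →
      (∀ p q q' t, V (p, q) → V (p, q') → q ≤ t → t ≤ q' → V (p, t)) →
      (∀ p, {q | B (p, q) ∧ V (p, q)}.ncard ≤ K) → ∃ N, ∀ p q, V (p, q) → k (p, q) ≤ N := by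
    intro K
    induction K with
    | zero =>
      intro V hV hVo hVc hVK
      have hno : ∀ p q, V (p, q) → ¬ B (p, q) := by
        intro p q h1 h2
        have hf : {q | B (p, q) ∧ V (p, q)}.Finite := (hBf p).subset fun x hx => hx.1
        have := (Set.ncard_eq_zero hf).1 (Nat.le_zero.1 (hVK p))
        have h3 : q ∈ {q | B (p, q) ∧ V (p, q)} := ⟨h2, h1⟩
        rw [this] at h3
        exact h3
      have hle : ∀ p q q', V (p, q) → V (p, q') → q ≤ q' → k (p, q) = k (p, q') := by
        intro p q q' h1 h2 hqq
        have := (hkd p (k (p, q))).conn hqq (fun z hz1 hz2 => by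
          have := hlc p z (hno p z (hVc p q q' z h1 h2 hz1 hz2))
          unfold LC at this ⊢
          filter_upwards [this] with w hw
          rw [hw])
        exact (this.1 rfl).symm
      have hc : ∀ p q q', V (p, q) → V (p, q') → k (p, q) = k (p, q') := by
        intro p q q' h1 h2
        rcases le_total q q' with h | h
        · exact hle p q q' h1 h2 h
        · exact (hle p q' q h2 h1 h).symm
      obtain ⟨N, hN⟩ := hT _ (hk.kU hV hVo hc)
      exact ⟨N, fun p q h => (kU_eq hc h) ▸ hN p⟩
    | succ K ih =>
      intro V hV hVo hVc hVK
      have hf : ∀ p, {q | B (p, q) ∧ V (p, q)}.Finite := fun p => (hBf p).subset fun x hx => hx.1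
      let U : Γ × M → Prop := fun z => V (z.1, z.2) ∧ ∀ b, (B (z.1, b) ∧ V (z.1, b)) → z.2 < b
      have hU : Dfn L M U := inferInstanceAs (Dfn L M (fun z : Γ × M =>
        V (z.1, z.2) ∧ ∀ b : M, (B (z.1, b) ∧ V (z.1, b)) → z.2 < b))
      have hUo : ∀ p q, U (p, q) → ∀ᶠ q' in 𝓝 q, U (p, q') := by
        intro p q ⟨h1, h2⟩
        refine (hVo p q h1).and ?_
        have := (Filter.eventually_all_finite (hf p)
          (p := fun b q' => q' < b) (l := 𝓝 q)).2 (fun b hb => eventually_lt_nhds (h2 b hb))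
        exact this
      have hle : ∀ p q q', U (p, q) → U (p, q') → q ≤ q' → k (p, q) = k (p, q') := by
        intro p q q' h1 h2 hqq
        have := (hkd p (k (p, q))).conn hqq (fun z hz1 hz2 => by
          have hzV := hVc p q q' z h1.1 h2.1 hz1 hz2
          have := hlc p z (fun hBz => absurd (h2.2 z ⟨hBz, hzV⟩) (not_lt.2 hz2))
          unfold LC at this ⊢
          filter_upwards [this] with w hw
          rw [hw])
        exact (this.1 rfl).symm
      have hc : ∀ p q q', U (p, q) → U (p, q') → k (p, q) = k (p, q') := by
        intro p q q' h1 h2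
        rcases le_total q q' with h | h
        · exact hle p q q' h1 h2 h
        · exact (hle p q' q h2 h1 h).symm
      obtain ⟨N1, hN1⟩ := hT _ (hk.kU hU hUo hc)
      let BV : Γ × M → Prop := fun z => B (z.1, z.2) ∧ V (z.1, z.2)
      have hBV : Dfn L M BV := inferInstanceAs (Dfn L M (fun z : Γ × M =>
        B (z.1, z.2) ∧ V (z.1, z.2)))
      let e : Γ → M := mn BV (fun _ => m0)
      have he : DM L M e := inferInstanceAs (DM L M (mn BV (fun _ => m0)))
      obtain ⟨N2, hN2⟩ := hT _ (hk.comp (h := fun p => (p, e p)) inferInstance)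
      obtain ⟨N3, hN3⟩ := ih (fun z => V (z.1, z.2) ∧ ∃ b, (B (z.1, b) ∧ V (z.1, b)) ∧ b < z.2)
        inferInstance
        (fun p q ⟨h1, b, h2, h3⟩ => (hVo p q h1).and (by
          filter_upwards [eventually_gt_nhds h3] with q' hq'
          exact ⟨b, h2, hq'⟩))
        (fun p q q' t ⟨h1, b, h2, h3⟩ ⟨h4, _⟩ h6 h7 =>
          ⟨hVc p q q' t h1 h4 h6 h7, b, h2, h3.trans_le h6⟩)
        (fun p => by
          by_cases hne : ∃ b, BV (p, b)
          · have hm := mn_fin (Z := BV) (d := fun _ => m0) (hf p) hne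
            have hs := Set.ncard_sdiff_singleton_add_one (a := e p)
              (s := {q | B (p, q) ∧ V (p, q)}) hm.1 (hf p)
            have hsub : {q | B (p, q) ∧ V (p, q) ∧ ∃ b, (B (p, b) ∧ V (p, b)) ∧ b < q} ⊆
                {q | B (p, q) ∧ V (p, q)} \ {e p} := by
              rintro q ⟨h1, h2, b, h3, h4⟩
              refine ⟨⟨h1, h2⟩, ?_⟩
              rintro rfl
              exact absurd (hm.2 b h3) (not_le.2 h4)
            have := Set.ncard_le_ncard hsub ((hf p).subset Set.sdiff_subset)
            have := hVK p
            simp only at *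
            omega
          · have : {q | B (p, q) ∧ V (p, q) ∧ ∃ b, (B (p, b) ∧ V (p, b)) ∧ b < q} = ∅ := by
              ext q
              simp only [mem_ofPred_eq, mem_empty_iff_false, iff_false]
              rintro ⟨h1, h2, _⟩
              exact hne ⟨q, h1, h2⟩
            simp only at *
            simp [this])
      refine ⟨max N1 (max N2 N3), fun p q hq => ?_⟩
      by_cases h1 : U (p, q)
      · refine le_max_of_le_left ?_
        rw [← kU_eq hc h1]
        exact hN1 p
      refine le_max_of_le_right ?_
      by_cases h2 : ∃ b, (B (p, b) ∧ V (p, b)) ∧ b < q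
      · exact le_max_of_le_right (hN3 p q ⟨hq, h2⟩)
      · refine le_max_of_le_left ?_
        have h3 : ∃ b, (B (p, b) ∧ V (p, b)) ∧ ¬ q < b := by
          by_contra hcon
          push Not at hcon
          exact h1 ⟨hq, fun b hb => hcon b hb⟩
        obtain ⟨b, hb, hqb⟩ := h3
        push Not at h2
        have hbq : b = q := le_antisymm (not_lt.1 hqb) (h2 b hb)
        subst hbq
        have hm := mn_fin (Z := BV) (d := fun _ => m0) (hf p) ⟨b, hb⟩
        have : b = e p := le_antisymm (h2 _ hm.1) (hm.2 b hb)
        rw [this]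
        exact hN2 p
  obtain ⟨N, hN⟩ := main K (fun _ => True) inferInstance
    (fun _ _ _ => Filter.Eventually.of_forall fun _ => trivial) (fun _ _ _ _ _ _ _ _ => trivial)
    (fun p => by simpa using hK p)
  exact ⟨N, fun g => hN g.1 g.2 trivial⟩

theorem TT.surj (hT : TT L M Γ) {h : Γ → Γ'} (hh : DM L M h) (hs : Function.Surjective h) :
    TT L M Γ' := by
  intro k hk
  obtain ⟨N, hN⟩ := hT _ (hk.comp hh)
  refine ⟨N, fun g => ?_⟩
  obtain ⟨g', rfl⟩ := hs g
  exact hN g'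

instance DM.snoc (n : ℕ) : DM L M (fun z : (Fin n → M) × M => (Fin.snoc z.1 z.2 : Fin (n + 1) → M)) := by
  refine DM.ofCoord _ (fun i => Fin.lastCases (motive := fun _ => Fin n ⊕ Unit)
    (Sum.inr ()) (fun j => Sum.inl j) i) ?_
  rintro ⟨g, t⟩ j
  change (Fin.snoc g t : Fin (n + 1) → M) j = _
  refine Fin.lastCases ?_ (fun j => ?_) j
  · rw [Fin.snoc_last, Fin.lastCases_last]
    rfl
  · rw [Fin.snoc_castSucc, Fin.lastCases_castSucc]
    rfl

theorem TT.fin (n : ℕ) : TT L M (Fin n → M) := by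
  induction n with
  | zero => exact fun k _ => ⟨k default, fun g => by rw [Subsingleton.elim g default]⟩
  | succ n ih =>
    refine TT.surj ih.prod (DM.snoc n) fun g => ⟨(Fin.init g, g (Fin.last n)), ?_⟩
    exact Fin.snoc_init_self g

theorem final {n : ℕ} (A : Set (Fin (n + 1) → M)) (hAdef : (Set.univ : Set M).Definable L A) :
    ∃ k : ℕ, ∀ c : Fin n → M,
      ((closure {t : M | Fin.snoc c t ∈ A} \ {t : M | Fin.snoc c t ∈ A}).Finite ∧
        (closure {t : M | Fin.snoc c t ∈ A} \ {t : M | Fin.snoc c t ∈ A}).ncard ≤ k) ∧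
      #(closure {t : M | Fin.snoc c t ∈ A}) ≤ #{t : M | Fin.snoc c t ∈ A} + k := by
  have hA : Dfn L M (fun g : Fin (n + 1) → M => g ∈ A) := ⟨hAdef⟩
  have hA2 : Dfn L M (fun z : (Fin n → M) × M => (Fin.snoc z.1 z.2 : Fin (n + 1) → M) ∈ A) :=
    DM.subst hA (DM.snoc n)
  let Y0 : (Fin n → M) × M → Prop := fun z => (Fin.snoc z.1 z.2 : Fin (n + 1) → M) ∈ A
  have hY0 : Dfn L M Y0 := hA2
  have hY : Dfn L M (fun z : (Fin n → M) × M => ¬ LC (fun t => Y0 (z.1, t)) z.2) :=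
    Dfn.congr (P := fun z : (Fin n → M) × M => ¬ ∀ᶠ t in 𝓝 z.2, (Y0 (z.1, t) ↔ Y0 (z.1, z.2)))
      inferInstance (fun z => by simp only [LC, eq_iff_iff])
  have hf : ∀ c, {t | ¬ LC (fun t => Y0 (c, t)) t}.Finite := fun c =>
    (Dfn.tm (L := L) (D := fun t => Y0 (c, t)) inferInstance).lcFinite
  obtain ⟨k, hk⟩ := TT.fin (L := L) (M := M) n _ (Sys.ncard hY hf)
  refine ⟨k, fun c => ?_⟩
  have hsub : closure {t : M | Fin.snoc c t ∈ A} \ {t : M | Fin.snoc c t ∈ A} ⊆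
      {t | ¬ LC (fun t => Y0 (c, t)) t} := by
    rintro t ⟨h1, h2⟩ hlc
    unfold LC at hlc
    rw [mem_closure_iff_frequently] at h1
    obtain ⟨s, hs1, hs2⟩ := (h1.and_eventually hlc).exists
    exact h2 (hs2.mp hs1)
  have hfin := (hf c).subset hsub
  have hcard := (Set.ncard_le_ncard hsub (hf c)).trans (hk c)
  refine ⟨⟨hfin, hcard⟩, ?_⟩
  have hun : closure {t : M | Fin.snoc c t ∈ A} ⊆ {t : M | Fin.snoc c t ∈ A} ∪
      (closure {t : M | Fin.snoc c t ∈ A} \ {t : M | Fin.snoc c t ∈ A}) := by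
    intro t ht
    by_cases h : t ∈ {t : M | Fin.snoc c t ∈ A}
    · exact Or.inl h
    · exact Or.inr ⟨ht, h⟩
  refine (Cardinal.mk_le_mk_of_subset hun).trans ((Cardinal.mk_union_le _ _).trans ?_)
  gcongr
  rw [← Set.cast_ncard hfin]
  exact_mod_cast hcard

end SysSec

end OM

/-- If `M` is o-minimal and `A ⊆ M^(n+1)` is definable, then there is a `k : ℕ` such that for
every `c ∈ M^n` the fiber `A_c = {t : (c,t) ∈ A}` satisfies: `cl(A_c) \ A_c` has at most `k`
elements (`cl` being closure in the order topology on `M`); in particular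
`|cl(A_c)| ≤ |A_c| + k`. -/
theorem closure_fiber_card_bound {L : FirstOrder.Language.{u, u}} {M : Type u} [L.Structure M]
    [LinearOrder M] [TopologicalSpace M] [OrderTopology M] (hM : IsOMinimal L M) {n : ℕ}
    (A : Set (Fin (n + 1) → M)) (hAdef : (Set.univ : Set M).Definable L A) :
    ∃ k : ℕ, ∀ c : Fin n → M,
      ((closure {t : M | Fin.snoc c t ∈ A} \ {t : M | Fin.snoc c t ∈ A}).Finite ∧
        (closure {t : M | Fin.snoc c t ∈ A} \ {t : M | Fin.snoc c t ∈ A}).ncard ≤ k) ∧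
      #(closure {t : M | Fin.snoc c t ∈ A}) ≤ #{t : M | Fin.snoc c t ∈ A} + k := by
  have := hM.denselyOrdered
  have := hM.noMinOrder
  have := hM.noMaxOrder
  have : OM.OMin L M := ⟨hM⟩
  exact OM.final A hAdef
end

section
/- Let M be an o-minimal structure and let A ⊆ M^{n+1} be an infinite definable set. Let π : M^{n+1} → M^n be the projection onto the first n coordinates, for c ∈ M^n let A_c = {t ∈ M : (c,t) ∈ A}, and set Ā = {(c,t) : c ∈ π(A), t ∈ cl(A_c)}, where cl denotes closure in the order topology on M. Then Ā is definable and |Ā| = |A|. -/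
open FirstOrder FirstOrder.Language Set Cardinal Filter Topology

universe u

/-- For `A ⊆ M^(n+1)`, the set `Ā = {(c,t) : c ∈ π(A), t ∈ cl(A_c)}`, where `π` is the
projection to the first `n` coordinates, `A_c = {t : (c,t) ∈ A}` is the fiber over `c`, and
`cl` denotes closure in the order topology on `M`. -/
def fiberwiseClosure {M : Type*} [TopologicalSpace M] {n : ℕ}
    (A : Set (Fin (n + 1) → M)) : Set (Fin (n + 1) → M) :=
  {x | (∃ t : M, Fin.snoc (Fin.init x) t ∈ A) ∧
    x (Fin.last n) ∈ closure {t : M | Fin.snoc (Fin.init x) t ∈ A}}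

theorem aux_def_exists {L : FirstOrder.Language.{u, u}} {M : Type u} [L.Structure M]
    {P : Set M} {α : Type} {S : Set (α ⊕ Fin 1 → M)} (h : P.Definable L S) :
    P.Definable L {x : α → M | ∃ t : M, Sum.elim x (fun _ => t) ∈ S} := by
  obtain ⟨φ, rfl⟩ := h
  refine ⟨φ.iExs (Fin 1), ?_⟩
  ext x
  simp only [mem_ofPred_eq, Formula.realize_iExs]
  constructor
  · rintro ⟨t, ht⟩
    exact ⟨_, ht⟩
  · rintro ⟨i, hi⟩
    refine ⟨i 0, ?_⟩
    convert hi using 2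
    funext j
    rw [Subsingleton.elim j 0]

theorem aux_def_forall {L : FirstOrder.Language.{u, u}} {M : Type u} [L.Structure M]
    {P : Set M} {α : Type} {S : Set (α ⊕ Fin 1 → M)} (h : P.Definable L S) :
    P.Definable L {x : α → M | ∀ t : M, Sum.elim x (fun _ => t) ∈ S} := by
  have := (aux_def_exists h.compl).compl
  convert this using 1
  ext x
  simp

theorem aux_fiber {L : FirstOrder.Language.{u, u}} {M : Type u} [L.Structure M] {n : ℕ}
    (A : Set (Fin (n + 1) → M)) (hA : (Set.univ : Set M).Definable L A) (c : Fin n → M) :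
    (Set.univ : Set M).Definable₁ L {t : M | (Fin.snoc c t : Fin (n+1) → M) ∈ A} := by
  obtain ⟨φ, rfl⟩ := hA
  let f : Fin (n+1) → L[[(Set.univ : Set M)]].Term (Fin 1) :=
    Fin.snoc (α := fun _ => L[[(Set.univ : Set M)]].Term (Fin 1))
      (fun i => (L.con (⟨c i, trivial⟩ : (Set.univ : Set M))).term) (Term.var 0)
  refine ⟨BoundedFormula.subst φ f, ?_⟩
  ext x
  have : (Fin.snoc c (x 0) : Fin (n+1) → M) = fun i => (f i).realize x := by
    funext i
    refine Fin.lastCases ?_ (fun j => ?_) i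
    · simp [f]
    · simp [f]
  simp only [mem_ofPred_eq, Formula.Realize, BoundedFormula.realize_subst, ← this]

theorem aux_frontier {M : Type u} [LinearOrder M] [TopologicalSpace M] [OrderTopology M]
    {s : Set M} (h : IsFinUnionPointsIntervals s) : (closure s \ s).Finite := by
  obtain ⟨P, I, rfl⟩ := h
  have key : ∀ p : WithBot M × WithTop M,
      (closure {x : M | p.1 < (x : WithBot M) ∧ (x : WithTop M) < p.2} \
        {x : M | p.1 < (x : WithBot M) ∧ (x : WithTop M) < p.2}).Finite := by
    rintro ⟨a, b⟩
    have hcl : IsClosed {x : M | a ≤ (x : WithBot M) ∧ (x : WithTop M) ≤ b} := by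
      refine IsClosed.inter (s₁ := {x : M | a ≤ (x : WithBot M)})
        (s₂ := {x : M | (x : WithTop M) ≤ b}) ?_ ?_
      · induction a with
        | bot => simp
        | coe a => simpa using! isClosed_Ici (a := a)
      · induction b with
        | top => simp
        | coe a => simpa using! isClosed_Iic (a := a)
    have hsub := closure_minimal (s := {x : M | a < (x : WithBot M) ∧ (x : WithTop M) < b})
      (t := {x : M | a ≤ (x : WithBot M) ∧ (x : WithTop M) ≤ b})
      (fun x hx => ⟨le_of_lt hx.1, le_of_lt hx.2⟩) hcl
    have f1 : {x : M | a = (x : WithBot M)}.Finite :=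
      Set.Subsingleton.finite (fun x hx y hy => WithBot.coe_injective (hx.symm.trans hy))
    have f2 : {x : M | (x : WithTop M) = b}.Finite :=
      Set.Subsingleton.finite (fun x hx y hy => WithTop.coe_injective (Eq.trans hx (Eq.symm hy)))
    refine (f1.union f2).subset ?_
    rintro x ⟨hx, hx'⟩
    have := hsub hx
    by_contra hc
    apply hx'
    refine ⟨lt_of_le_of_ne this.1 fun e => hc (Or.inl e),
      lt_of_le_of_ne this.2 fun e => hc (Or.inr e)⟩
  refine (I.finite_toSet.biUnion (fun p _ => key p)).subset ?_
  rintro x ⟨hx, hx'⟩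
  rw [closure_union, P.finite_toSet.isClosed.closure_eq,
    Finset.closure_biUnion] at hx
  rcases hx with hx | hx
  · exact (hx' (Or.inl hx)).elim
  · simp only [mem_iUnion] at hx ⊢
    obtain ⟨p, hp, hx⟩ := hx
    exact ⟨p, hp, hx, fun hc => hx' (Or.inr (mem_biUnion hp hc))⟩

theorem aux_def_s13 {L : FirstOrder.Language.{u, u}} {M : Type u}
    [L.Structure M] [LinearOrder M] [TopologicalSpace M] [OrderTopology M]
    (hM : IsOMinimal L M) {n : ℕ} (A : Set (Fin (n + 1) → M))
    (hA : (Set.univ : Set M).Definable L A) :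
    (Set.univ : Set M).Definable L (fiberwiseClosure A) := by
  have := hM.noMinOrder
  have := hM.noMaxOrder
  have hlt := hM.definable_lt.mono (empty_subset (Set.univ : Set M))
  have lt : ∀ {α : Type} (i j : α), (Set.univ : Set M).Definable L {x : α → M | x i < x j} :=
    fun i j => by simpa using! hlt.preimage_comp ![i, j]
  have sub : ∀ {α : Type} (c : Fin n → α) (j : α),
      (Set.univ : Set M).Definable L {x : α → M | (Fin.snoc (x ∘ c) (x j) : Fin (n+1) → M) ∈ A} :=
    fun c j => by
      have := hA.preimage_comp (Fin.snoc c j : Fin (n+1) → _)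
      convert this using 1
      ext x
      simp only [mem_ofPred_eq, mem_preimage]
      rw [Fin.comp_snoc]
  have h1 := aux_def_exists
    (sub (α := Fin (n+1) ⊕ Fin 1) (fun i => Sum.inl i.castSucc) (Sum.inr 0))
  have h2 := aux_def_exists
    (((lt (α := ((Fin (n+1) ⊕ Fin 1) ⊕ Fin 1) ⊕ Fin 1) (Sum.inl (Sum.inl (Sum.inr 0))) (Sum.inr 0)).inter
      (lt (Sum.inr 0) (Sum.inl (Sum.inr 0)))).inter
      (sub (fun i => Sum.inl (Sum.inl (Sum.inl i.castSucc))) (Sum.inr 0)))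
  have h3 := aux_def_forall (aux_def_forall
    (((lt (α := (Fin (n+1) ⊕ Fin 1) ⊕ Fin 1) (Sum.inl (Sum.inr 0)) (Sum.inl (Sum.inl (Fin.last n)))).inter
      (lt (Sum.inl (Sum.inl (Fin.last n))) (Sum.inr 0))).himp h2))
  convert h1.inter h3 using 1
  ext x
  have e : Fin.init x = (fun i : Fin n => x i.castSucc) := rfl
  simp only [fiberwiseClosure, mem_ofPred_eq, mem_inter_iff, himp_eq, Set.sup_eq_union, e,
    mem_closure_iff_nhds_basis (nhds_basis_Ioo (x (Fin.last n))), mem_union, mem_compl_iff,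
    Sum.elim_inl, Sum.elim_inr, Function.comp_def, Prod.forall, mem_Ioo]
  refine and_congr Iff.rfl (forall_congr' fun a => forall_congr' fun b => ?_)
  clear h1 h2 h3 lt sub hlt hA
  grind

theorem fiberwiseClosure_definable_and_card_eq {L : FirstOrder.Language.{u, u}} {M : Type u}
    [L.Structure M] [LinearOrder M] [TopologicalSpace M] [OrderTopology M]
    (hM : IsOMinimal L M) {n : ℕ} (A : Set (Fin (n + 1) → M))
    (hAdef : (Set.univ : Set M).Definable L A) (hAinf : A.Infinite) :
    (Set.univ : Set M).Definable L (fiberwiseClosure A) ∧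
      #(fiberwiseClosure A) = #A := by
  refine ⟨aux_def_s13 hM A hAdef, le_antisymm ?_ (mk_le_mk_of_subset ?_)⟩
  · have hinf : ℵ₀ ≤ #A := by
      have := hAinf.to_subtype
      exact aleph0_le_mk _
    let D : (Fin n → M) → Set (Fin (n+1) → M) := fun c =>
      (fun t => (Fin.snoc c t : Fin (n+1) → M)) ''
        (closure {t : M | (Fin.snoc c t : Fin (n+1) → M) ∈ A} \
          {t : M | (Fin.snoc c t : Fin (n+1) → M) ∈ A})
    have hD : ∀ c, (D c).Finite := fun c =>
      (aux_frontier (hM.tame _ (aux_fiber A hAdef c))).image _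
    have hsub : fiberwiseClosure A ⊆ A ∪ ⋃ c ∈ (Fin.init '' A : Set (Fin n → M)), D c := by
      rintro x ⟨⟨t, ht⟩, hx⟩
      by_cases hxA : x ∈ A
      · exact Or.inl hxA
      · refine Or.inr (mem_biUnion (x := Fin.init x) ⟨_, ht, by simp⟩
          ⟨x (Fin.last n), ⟨hx, ?_⟩, by simp⟩)
        simpa using hxA
    have hB : #(⋃ c ∈ (Fin.init '' A : Set (Fin n → M)), D c : Set (Fin (n+1) → M)) ≤ #A := by
      refine (mk_biUnion_le _ _).trans ?_
      refine (mul_le_mul' mk_image_le (ciSup_le' (a := ℵ₀) fun c => ?_)).trans ?_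
      · exact (hD _).lt_aleph0.le
      · exact (mul_eq_left hinf hinf aleph0_ne_zero).le
    refine (mk_le_mk_of_subset hsub).trans ((mk_union_le _ _).trans ?_)
    exact (add_le_add le_rfl hB).trans (add_eq_self hinf).le
  · intro x hx
    exact ⟨⟨x (Fin.last n), by simpa using hx⟩, subset_closure (by simpa using hx)⟩
end
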